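/- arXiv:1607.08716 — 5 statements merged into one kernel-verified Lean document; each statement's English description precedes it below -/
import Mathlib

section
/- Let d ≥ 1 and let M = QDT ∈ SL(d,ℝ), where Q ∈ SO(d), D = diag(c₁,…,c_d) with c_i > 0 and ∏_{i=1}^d c_i = 1, and T is a lower triangular matrix with 1's on the diagonal. Then for every u ∈ ℝ^d and every α > 0, Σ_{k∈ℤ^d} exp(−πα|Mk+u|²) ≥ Σ_{n∈ℤ^d} exp(−πα|D(n + (1/2,…,1/2))|²) = ∏_{i=1}^{d} θ₂(c_i² α), where θ₂(x) = Σ_{n∈ℤ} e^{−πx(n+1/2)²}. -/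
/-!
Since `Q` is orthogonal, `|QDTk + u|² = ∑ᵢ cᵢ² (kᵢ + sᵢ(k))²` with a shift `sᵢ(k)` depending only
on the `kⱼ` with `j < i`. Summing out the last coordinate first, then the last but one, and so on,
leaves the one-dimensional inequality `S(1/2, t) ≤ S(a, t)` for
`S(a, t) = ∑ₙ exp(-π (n + a)² t)`, which is Mathlib's `HurwitzZeta.evenKernel a t`.

Rotating `ℤ²` by 45° gives `S(a, t)² = pA + rB`, where `p, r, A, B` are the values of `S(·, 2t)` at
`a, a + 1/2, 0, 1/2`. The same rotation gives `pr = C S(2a + 1/2, t)` and `AB = C S(1/2, t)`, where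
`C = S(1/4, 4t) = S(1/2, t) / 2`. Hence `S(a, t)⁴ ≥ 4 (pA) (rB) = S(1/2, t)³ S(2a + 1/2, t)` by
AM-GM, and at a point `a` where `S(·, t)` is minimal this says `S(a, t)³ ≥ S(1/2, t)³`.
-/

open scoped BigOperators

/-- The classical Jacobi theta function `θ₂(x) = Σ_{k∈ℤ} e^{−π(k+1/2)²x}`. -/
noncomputable def theta2 (x : ℝ) : ℝ :=
  ∑' n : ℤ, Real.exp (-Real.pi * ((n : ℝ) + 1 / 2) ^ 2 * x)

section OneDimensional

open HurwitzZeta Real Set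

theorem theta2_eq_evenKernel {t : ℝ} (ht : 0 < t) : theta2 t = evenKernel ↑(1 / 2 : ℝ) t :=
  (hasSum_int_evenKernel _ ht).tsum_eq

theorem evenKernel_pos (a : UnitAddCircle) {t : ℝ} (ht : 0 < t) : 0 < evenKernel a t := by
  induction a using QuotientAddGroup.induction_on with
  | H a =>
    have h := hasSum_int_evenKernel a ht
    exact h.tsum_eq ▸ h.summable.tsum_pos (fun _ => (exp_pos _).le) 0 (exp_pos _)

theorem continuous_evenKernel_left {t : ℝ} (ht : 0 < t) :
    Continuous fun a : UnitAddCircle => evenKernel a t := by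
  have hθ : Continuous fun z : ℂ => jacobiTheta₂ z (Complex.I * t) :=
    continuous_iff_continuousAt.2 fun z =>
      (differentiableAt_jacobiTheta₂_fst z (by simpa using ht)).continuousAt
  have hdef : Continuous fun a : ℝ => (evenKernel a t : ℂ) := by
    simp only [evenKernel_def]
    fun_prop
  exact (QuotientAddGroup.isQuotientMap_mk _).continuous_iff.2 (Complex.continuous_re.comp hdef)

theorem hasSum_evenKernel_mul (a b : ℝ) {t : ℝ} (ht : 0 < t) :
    HasSum (fun z : ℤ × ℤ => exp (-π * ((z.1 + a) ^ 2 + (z.2 + b) ^ 2) * t))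
      (evenKernel a t * evenKernel b t) := by
  have ha := hasSum_int_evenKernel a ht
  have hb := hasSum_int_evenKernel b ht
  refine (ha.mul hb (ha.summable.mul_of_nonneg hb.summable (fun _ => (exp_pos _).le)
    fun _ => (exp_pos _).le)).congr_fun fun z => ?_
  rw [← exp_add]
  ring_nf

theorem hasSum_add_of_isCompl_range {α β γ δ : Type*} [AddCommMonoid α] [TopologicalSpace α]
    [ContinuousAdd α] {f : β → α} {i : γ → β} {j : δ → β} {x y : α} (hi : Function.Injective i)
    (hj : Function.Injective j) (hij : IsCompl (range i) (range j)) (hx : HasSum (f ∘ i) x)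
    (hy : HasSum (f ∘ j) y) : HasSum f (x + y) :=
  HasSum.add_isCompl hij (hi.hasSum_range_iff.2 hx) (hj.hasSum_range_iff.2 hy)

theorem isCompl_range_add_sub :
    IsCompl (range fun z : ℤ × ℤ => (z.1 + z.2, z.1 - z.2))
      (range fun z : ℤ × ℤ => (z.1 + z.2 + 1, z.1 - z.2)) := by
  have hEven : range (fun z : ℤ × ℤ => (z.1 + z.2, z.1 - z.2)) = {z | Even (z.1 + z.2)} := by
    ext ⟨m, n⟩
    simp only [mem_range, Prod.exists, Prod.mk.injEq, mem_ofPred_eq]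
    exact ⟨fun ⟨p, q, h⟩ => ⟨p, by omega⟩, fun ⟨p, h⟩ => ⟨p, p - n, by omega⟩⟩
  have hOdd : range (fun z : ℤ × ℤ => (z.1 + z.2 + 1, z.1 - z.2)) = {z | Odd (z.1 + z.2)} := by
    ext ⟨m, n⟩
    simp only [mem_range, Prod.exists, Prod.mk.injEq, mem_ofPred_eq]
    exact ⟨fun ⟨p, q, h⟩ => ⟨p, by omega⟩, fun ⟨p, h⟩ => ⟨p, p - n, by omega⟩⟩
  rw [hEven, hOdd]
  exact Int.isCompl_even_odd.preimage fun z : ℤ × ℤ => z.1 + z.2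

-- The substitution `(m, n) ↦ (m + n, m - n)` identifies `ℤ²` with an index-two sublattice of
-- itself; the two terms on the right are its two cosets.
theorem evenKernel_add_mul_sub (a b : ℝ) {t : ℝ} (ht : 0 < t) :
    evenKernel ↑(a + b) t * evenKernel ↑(a - b) t =
      evenKernel a (2 * t) * evenKernel b (2 * t) +
        evenKernel ↑(a + 1 / 2) (2 * t) * evenKernel ↑(b + 1 / 2) (2 * t) := by
  have h2t : 0 < 2 * t := by positivity
  refine (hasSum_evenKernel_mul (a + b) (a - b) ht).unique <|
    hasSum_add_of_isCompl_range ?_ ?_ isCompl_range_add_sub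
      ((hasSum_evenKernel_mul a b h2t).congr_fun fun z => ?_)
      ((hasSum_evenKernel_mul (a + 1 / 2) (b + 1 / 2) h2t).congr_fun fun z => ?_)
  · rintro ⟨m, n⟩ ⟨m', n'⟩ h
    simp only [Prod.mk.injEq] at h ⊢
    omega
  · rintro ⟨m, n⟩ ⟨m', n'⟩ h
    simp only [Prod.mk.injEq] at h ⊢
    omega
  all_goals
    simp only [Function.comp_apply]
    push_cast
    ring_nf

theorem evenKernel_four_mul_add_half (a : ℝ) {t : ℝ} (ht : 0 < t) :
    evenKernel a (4 * t) + evenKernel ↑(a + 1 / 2) (4 * t) = evenKernel ↑(2 * a) t := by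
  have h4t : 0 < 4 * t := by positivity
  have hparity : IsCompl (range fun n : ℤ => 2 * n) (range fun n : ℤ => 2 * n + 1) := by
    rw [range_two_mul, range_two_mul_add_one]
    exact Int.isCompl_even_odd
  refine (hasSum_add_of_isCompl_range (fun m n h => ?_) (fun m n h => ?_) hparity
    ((hasSum_int_evenKernel a h4t).congr_fun fun n => ?_)
    ((hasSum_int_evenKernel (a + 1 / 2) h4t).congr_fun fun n => ?_)).unique
    (hasSum_int_evenKernel (2 * a) ht)
  · simpa using h
  · simpa using h
  all_goals
    simp only [Function.comp_apply]
    push_cast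
    ring_nf

theorem evenKernel_mul_evenKernel_add_half (a : ℝ) {t : ℝ} (ht : 0 < t) :
    evenKernel a (2 * t) * evenKernel ↑(a + 1 / 2) (2 * t) =
      evenKernel ↑(1 / 4 : ℝ) (4 * t) * evenKernel ↑(2 * a + 1 / 2) t := by
  have hquarter : evenKernel ↑(-(1 / 4) : ℝ) (4 * t) = evenKernel ↑(1 / 4 : ℝ) (4 * t) := by
    rw [AddCircle.coe_neg, evenKernel_neg]
  have hmul := evenKernel_add_mul_sub (a + 1 / 4) (-(1 / 4)) (t := 2 * t) (by positivity)
  have hparity := evenKernel_four_mul_add_half (a + 1 / 4) ht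
  ring_nf at hmul hparity hquarter ⊢
  rw [hmul, ← hparity, hquarter]
  ring

theorem evenKernel_half_eq_two_mul {t : ℝ} (ht : 0 < t) :
    evenKernel ↑(1 / 2 : ℝ) t = 2 * evenKernel ↑(1 / 4 : ℝ) (4 * t) := by
  have hparity := evenKernel_four_mul_add_half (-(1 / 4)) ht
  rw [show (-(1 / 4) + 1 / 2 : ℝ) = 1 / 4 by norm_num,
    show (2 * -(1 / 4) : ℝ) = -(1 / 2) by norm_num] at hparity
  simp only [AddCircle.coe_neg, evenKernel_neg] at hparity
  rw [← hparity, two_mul]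

theorem evenKernel_half_pow_mul_le (a : ℝ) {t : ℝ} (ht : 0 < t) :
    evenKernel ↑(1 / 2 : ℝ) t ^ 3 * evenKernel ↑(2 * a + 1 / 2) t ≤ evenKernel a t ^ 4 := by
  have hsq := evenKernel_add_mul_sub a 0 ht
  have ha := evenKernel_mul_evenKernel_add_half a ht
  have h0 := evenKernel_mul_evenKernel_add_half 0 ht
  simp only [mul_zero, zero_add, add_zero, sub_zero] at hsq h0
  set p := evenKernel a (2 * t)
  set r := evenKernel ↑(a + 1 / 2) (2 * t)
  set A := evenKernel ↑(0 : ℝ) (2 * t)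
  set B := evenKernel ↑(1 / 2 : ℝ) (2 * t)
  set C := evenKernel ↑(1 / 4 : ℝ) (4 * t)
  set h := evenKernel ↑(1 / 2 : ℝ) t
  set y := evenKernel ↑(2 * a + 1 / 2) t
  have hC : h = 2 * C := evenKernel_half_eq_two_mul ht
  calc h ^ 3 * y = 4 * (C * y) * (C * h) := by rw [hC]; ring
    _ = 4 * (p * A) * (r * B) := by rw [← ha, ← h0]; ring
    _ ≤ (p * A + r * B) ^ 2 := four_mul_le_sq_add _ _
    _ = evenKernel a t ^ 4 := by rw [← hsq]; ring

theorem evenKernel_half_le (a : UnitAddCircle) {t : ℝ} (ht : 0 < t) :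
    evenKernel ↑(1 / 2 : ℝ) t ≤ evenKernel a t := by
  obtain ⟨b, -, hb⟩ := isCompact_univ.exists_isMinOn univ_nonempty
    (continuous_evenKernel_left ht).continuousOn
  rw [isMinOn_univ_iff] at hb
  refine le_trans ?_ (hb a)
  induction b using QuotientAddGroup.induction_on with
  | H b =>
    have hpos := evenKernel_pos b ht
    refine le_of_pow_le_pow_left₀ three_ne_zero hpos.le (le_of_mul_le_mul_right ?_ hpos)
    calc evenKernel ↑(1 / 2 : ℝ) t ^ 3 * evenKernel b t
        ≤ evenKernel ↑(1 / 2 : ℝ) t ^ 3 * evenKernel ↑(2 * b + 1 / 2) t :=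
          mul_le_mul_of_nonneg_left (hb _) (pow_nonneg (evenKernel_pos _ ht).le 3)
      _ ≤ evenKernel b t ^ 4 := evenKernel_half_pow_mul_le b ht
      _ = evenKernel b t ^ 3 * evenKernel b t := pow_succ _ 3

end OneDimensional

section Triangular

open Set

theorem summable_and_tsum_mul_mem_Icc {ι κ : Type*} {P : ι → ℝ} {G : ι → κ → ℝ}
    {L H l h : ℝ} (hP₀ : ∀ i, 0 ≤ P i) (hG₀ : ∀ i j, 0 ≤ G i j) (hl₀ : 0 ≤ l) (hh₀ : 0 ≤ h)
    (hP : Summable P) (hPs : ∑' i, P i ∈ Icc L H)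
    (hG : ∀ i, Summable (G i)) (hGs : ∀ i, ∑' j, G i j ∈ Icc l h) :
    Summable (fun x : ι × κ => P x.1 * G x.1 x.2) ∧
      ∑' x : ι × κ, P x.1 * G x.1 x.2 ∈ Icc (L * l) (H * h) := by
  have hfiber : Summable fun i => P i * ∑' j, G i j :=
    (hP.mul_right h).of_nonneg_of_le (fun i => mul_nonneg (hP₀ i) (tsum_nonneg (hG₀ i)))
      fun i => mul_le_mul_of_nonneg_left (hGs i).2 (hP₀ i)
  have hnonneg : 0 ≤ fun x : ι × κ => P x.1 * G x.1 x.2 :=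
    fun x => mul_nonneg (hP₀ x.1) (hG₀ x.1 x.2)
  have hsum : Summable fun x : ι × κ => P x.1 * G x.1 x.2 := by
    refine (summable_prod_of_nonneg hnonneg).2 ⟨fun i => (hG i).mul_left (P i), ?_⟩
    simpa only [tsum_mul_left] using hfiber
  refine ⟨hsum, ?_⟩
  simp only [hsum.tsum_prod, tsum_mul_left]
  constructor
  · calc L * l ≤ (∑' i, P i) * l := mul_le_mul_of_nonneg_right hPs.1 hl₀
      _ = ∑' i, P i * l := tsum_mul_right.symm
      _ ≤ ∑' i, P i * ∑' j, G i j := (hP.mul_right l).tsum_le_tsum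
          (fun i => mul_le_mul_of_nonneg_left (hGs i).1 (hP₀ i)) hfiber
  · calc ∑' i, P i * ∑' j, G i j ≤ ∑' i, P i * h := hfiber.tsum_le_tsum
          (fun i => mul_le_mul_of_nonneg_left (hGs i).2 (hP₀ i)) (hP.mul_right h)
      _ = (∑' i, P i) * h := tsum_mul_right
      _ ≤ H * h := mul_le_mul_of_nonneg_right hPs.2 hh₀

theorem summable_and_tsum_prod_mem_Icc {β : Type*} [Nonempty β] {d : ℕ}
    {f : Fin d → (Fin d → β) → β → ℝ} (hf : ∀ i, DependsOn (f i) (Iio i))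
    (hf₀ : ∀ i k n, 0 ≤ f i k n) (hfs : ∀ i k, Summable (f i k)) {lo hi : Fin d → ℝ}
    (hlo : ∀ i, 0 ≤ lo i) (hsum : ∀ i k, ∑' n, f i k n ∈ Icc (lo i) (hi i)) :
    Summable (fun k : Fin d → β => ∏ i, f i k (k i)) ∧
      ∑' k : Fin d → β, ∏ i, f i k (k i) ∈ Icc (∏ i, lo i) (∏ i, hi i) := by
  obtain ⟨b⟩ := ‹Nonempty β›
  induction d with
  | zero => exact ⟨(hasSum_fintype _).summable, by simp⟩
  | succ d ih =>
    let e (k : Fin d → β) : Fin (d + 1) → β := Fin.snoc k b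
    have hsnoc (i) (k : Fin d → β) (n : β) : f i (Fin.snoc k n : Fin (d + 1) → β) = f i (e k) := by
      refine hf i fun j hj => ?_
      obtain ⟨j, rfl⟩ := Fin.exists_castSucc_eq.2 (Fin.ne_last_of_lt hj)
      simp [e]
    have hdep (i : Fin d) : DependsOn (fun k => f i.castSucc (e k)) (Iio i) := by
      refine fun k k' h => hf i.castSucc fun j hj => ?_
      obtain ⟨j, rfl⟩ := Fin.exists_castSucc_eq.2 (Fin.ne_last_of_lt hj)
      simpa [e] using h j (by simpa using hj)
    obtain ⟨hP, hPs⟩ := ih hdep (fun i k => hf₀ _ _) (fun i k => hfs _ _) (fun i => hlo _)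
      fun i k => hsum _ _
    let E : (Fin d → β) × β ≃ (Fin (d + 1) → β) :=
      (Equiv.prodComm _ _).trans (Fin.snocEquiv fun _ => β)
    have hE (x : (Fin d → β) × β) : ∏ i, f i (E x) (E x i) =
        (∏ i : Fin d, f i.castSucc (e x.1) (x.1 i)) * f (Fin.last d) (e x.1) x.2 := by
      have hEx : E x = Fin.snoc x.1 x.2 := rfl
      simp only [hEx, hsnoc, Fin.prod_univ_castSucc, Fin.snoc_castSucc, Fin.snoc_last]
    have hlast := hsum (Fin.last d)
    have := summable_and_tsum_mul_mem_Icc (fun k => Finset.prod_nonneg fun i _ => hf₀ _ _ _)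
      (fun k => hf₀ _ (e k)) (hlo _) ((hlo _).trans ((hlast (e fun _ => b)).1.trans (hlast _).2))
      hP hPs (fun k => hfs _ (e k)) fun k => hlast (e k)
    rw [← E.summable_iff, ← E.tsum_eq, Fin.prod_univ_castSucc, Fin.prod_univ_castSucc]
    simpa only [Function.comp_def, hE] using this

theorem tsum_prod_apply_eq_prod_tsum {β : Type*} [Nonempty β] {d : ℕ} {g : Fin d → β → ℝ}
    (hg₀ : ∀ i n, 0 ≤ g i n) (hg : ∀ i, Summable (g i)) :
    ∑' k : Fin d → β, ∏ i, g i (k i) = ∏ i, ∑' n, g i n := by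
  obtain ⟨-, h⟩ := summable_and_tsum_prod_mem_Icc (f := fun i _ => g i)
    (fun _ _ _ _ => rfl) (fun i _ => hg₀ i) (fun i _ => hg i)
    (fun i => tsum_nonneg (hg₀ i)) (fun _ _ => ⟨le_rfl, le_rfl⟩)
  exact le_antisymm h.2 h.1

end Triangular

section Theta

open HurwitzZeta Real Set

theorem tsum_prod_gaussian_half {d : ℕ} {t : Fin d → ℝ} (ht : ∀ i, 0 < t i) :
    ∑' k : Fin d → ℤ, ∏ i, exp (-π * ((k i : ℝ) + 1 / 2) ^ 2 * t i) = ∏ i, theta2 (t i) :=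
  tsum_prod_apply_eq_prod_tsum (g := fun i (n : ℤ) => exp (-π * ((n : ℝ) + 1 / 2) ^ 2 * t i))
    (fun _ _ => (exp_pos _).le) fun i => (hasSum_int_evenKernel (1 / 2) (ht i)).summable

theorem prod_theta2_le_tsum_prod_gaussian {d : ℕ} {t : Fin d → ℝ} (ht : ∀ i, 0 < t i)
    {s : Fin d → (Fin d → ℤ) → ℝ} (hs : ∀ i, DependsOn (s i) (Iio i)) :
    ∏ i, theta2 (t i) ≤ ∑' k : Fin d → ℤ, ∏ i, exp (-π * ((k i : ℝ) + s i k) ^ 2 * t i) := by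
  have hbdd (i : Fin d) : ∃ C, ∀ a : UnitAddCircle, evenKernel a (t i) ≤ C := by
    obtain ⟨C, hC⟩ := (isCompact_range (continuous_evenKernel_left (ht i))).bddAbove
    exact ⟨C, fun a => hC (mem_range_self a)⟩
  choose C hC using hbdd
  have hsum (i : Fin d) (k : Fin d → ℤ) := hasSum_int_evenKernel (s i k) (ht i)
  refine (summable_and_tsum_prod_mem_Icc (lo := fun i => theta2 (t i)) (hi := C)
    (f := fun i k (n : ℤ) => exp (-π * (n + s i k) ^ 2 * t i))
    (fun i k k' h => by simp only [hs i h]) (fun _ _ _ => (exp_pos _).le)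
    (fun i k => (hsum i k).summable) (fun i => tsum_nonneg fun _ => (exp_pos _).le)
    fun i k => ?_).2.1
  rw [(hsum i k).tsum_eq, theta2_eq_evenKernel (ht i)]
  exact ⟨evenKernel_half_le _ (ht i), hC i _⟩

end Theta

section Iwasawa

open Matrix

theorem sum_sq_mulVec_add_of_transpose_mul_self {n R : Type*} [Fintype n] [DecidableEq n]
    [CommRing R] {Q : Matrix n n R} (hQ : Qᵀ * Q = 1) (w u : n → R) :
    ∑ i, ((Q *ᵥ w) i + u i) ^ 2 = ∑ i, (w i + (Qᵀ *ᵥ u) i) ^ 2 := by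
  have hu : Q *ᵥ (w + Qᵀ *ᵥ u) = Q *ᵥ w + u := by
    rw [mulVec_add, mulVec_mulVec, mul_eq_one_comm.1 hQ, one_mulVec]
  have hnorm : (Q *ᵥ (w + Qᵀ *ᵥ u)) ⬝ᵥ (Q *ᵥ (w + Qᵀ *ᵥ u)) =
      (w + Qᵀ *ᵥ u) ⬝ᵥ (w + Qᵀ *ᵥ u) := by
    rw [dotProduct_mulVec, vecMul_mulVec, hQ, vecMul_one]
  rw [hu] at hnorm
  simpa only [dotProduct, ← pow_two, Pi.add_apply] using hnorm

theorem mulVec_apply_of_lower_unitriangular {n R : Type*} [Fintype n] [LinearOrder n]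
    [LocallyFiniteOrderBot n] [NonAssocSemiring R] {T : Matrix n n R}
    (hT : ∀ i j, i < j → T i j = 0) (hdiag : ∀ i, T i i = 1) (v : n → R) (i : n) :
    (T *ᵥ v) i = v i + ∑ j ∈ Finset.Iio i, T i j * v j := by
  calc (T *ᵥ v) i = ∑ j ∈ Finset.Iic i, T i j * v j :=
        (Finset.sum_subset (Finset.subset_univ _) fun j _ hj =>
          mul_eq_zero_of_left (hT i j (by simpa using hj)) _).symm
    _ = v i + ∑ j ∈ Finset.Iio i, T i j * v j := by
        rw [← Finset.add_sum_Iio_eq_sum_Iic, hdiag, one_mul]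

section Shift

variable {n K : Type*} [Fintype n] [LinearOrder n] [LocallyFiniteOrderBot n] [Field K]

/-- The shift `sᵢ(v)` in `|QDTv + u|² = ∑ᵢ cᵢ² (vᵢ + sᵢ(v))²`, for `Q` orthogonal,
`D = diag(c)` and `T` lower unitriangular: the strictly lower triangular part of `T` applied to `v`,
plus `D⁻¹Qᵀu`. -/
def iwasawaShift (Q T : Matrix n n K) (c u : n → K) (i : n) (v : n → K) : K :=
  ∑ j ∈ Finset.Iio i, T i j * v j + (Qᵀ *ᵥ u) i / c i

theorem dependsOn_iwasawaShift (Q T : Matrix n n K) (c u : n → K) (i : n) :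
    DependsOn (iwasawaShift Q T c u i) (Set.Iio i) := fun v w h => by
  have hsum : ∑ j ∈ Finset.Iio i, T i j * v j = ∑ j ∈ Finset.Iio i, T i j * w j :=
    Finset.sum_congr rfl fun j hj => by rw [h j (by simpa using hj)]
  simp only [iwasawaShift, hsum]

theorem sum_sq_iwasawa_mulVec_add {Q T : Matrix n n K} {c : n → K} (hc : ∀ i, c i ≠ 0)
    (hQ : Qᵀ * Q = 1) (hT : ∀ i j, i < j → T i j = 0) (hdiag : ∀ i, T i i = 1) (u v : n → K) :
    ∑ i, (((Q * diagonal c * T) *ᵥ v) i + u i) ^ 2 =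
      ∑ i, c i ^ 2 * (v i + iwasawaShift Q T c u i v) ^ 2 := by
  simp only [Matrix.mul_assoc, ← mulVec_mulVec]
  rw [sum_sq_mulVec_add_of_transpose_mul_self hQ]
  refine Finset.sum_congr rfl fun i _ => ?_
  rw [mulVec_diagonal, mulVec_apply_of_lower_unitriangular hT hdiag, iwasawaShift]
  field [hc i]

end Shift

theorem exp_neg_pi_mul_sum_sq {ι : Type*} [Fintype ι] (α : ℝ) (c x : ι → ℝ) :
    Real.exp (-Real.pi * α * ∑ i, c i ^ 2 * x i ^ 2) =
      ∏ i, Real.exp (-Real.pi * x i ^ 2 * (c i ^ 2 * α)) := by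
  rw [← Real.exp_sum, Finset.mul_sum]
  exact congrArg Real.exp (Finset.sum_congr rfl fun i _ => by ring)

theorem iwasawa_theta_lower_bound_general {d : ℕ} {Q T : Matrix (Fin d) (Fin d) ℝ} {c : Fin d → ℝ}
    (hc : ∀ i, c i ≠ 0) (hQ : Qᵀ * Q = 1) (hT : ∀ i j, i < j → T i j = 0)
    (hdiag : ∀ i, T i i = 1) (u : Fin d → ℝ) {α : ℝ} (hα : 0 < α) :
    (∏ i, theta2 (c i ^ 2 * α))
      ≤ ∑' k : Fin d → ℤ, Real.exp (-Real.pi * α *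
          ∑ i, (((Q * diagonal c * T) *ᵥ fun j => (k j : ℝ)) i + u i) ^ 2) ∧
    (∑' n : Fin d → ℤ,
        Real.exp (-Real.pi * α * ∑ i, ((diagonal c *ᵥ fun j => (n j : ℝ) + 1 / 2) i) ^ 2))
      = ∏ i, theta2 (c i ^ 2 * α) := by
  have ht (i : Fin d) : 0 < c i ^ 2 * α := mul_pos (sq_pos_of_ne_zero (hc i)) hα
  constructor
  · simp only [sum_sq_iwasawa_mulVec_add hc hQ hT hdiag, exp_neg_pi_mul_sum_sq]
    exact prod_theta2_le_tsum_prod_gaussian ht fun i k k' h =>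
      dependsOn_iwasawaShift Q T c u i fun j hj => congrArg Int.cast (h j hj)
  · simp only [mulVec_diagonal, mul_pow, exp_neg_pi_mul_sum_sq]
    exact tsum_prod_gaussian_half ht

end Iwasawa

/-- for `M = QDT` with `Q ∈ SO(d)`, `D = diag(c₁,…,c_d)` (`c_i > 0`,
`∏ c_i = 1`) and `T` lower triangular unipotent, and for every `u ∈ ℝ^d`, `α > 0`:
`θ_{Mℤ^d+u}(α) ≥ θ_{D(ℤ+1/2)^d}(α) = ∏ θ₂(c_i²α)`. -/
theorem iwasawa_theta_lower_bound
    (d : ℕ) (hd : 1 ≤ d)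
    (Q D T M : Matrix (Fin d) (Fin d) ℝ)
    (c : Fin d → ℝ) (hc : ∀ i, 0 < c i) (hprod : ∏ i, c i = 1)
    (hQ : Q.transpose * Q = 1) (hQdet : Q.det = 1)
    (hD : D = Matrix.diagonal c)
    (hT : ∀ i j : Fin d, i < j → T i j = 0) (hTdiag : ∀ i, T i i = 1)
    (hM : M = Q * D * T)
    (u : Fin d → ℝ) (α : ℝ) (hα : 0 < α) :
    (∏ i, theta2 (c i ^ 2 * α))
      ≤ ∑' k : Fin d → ℤ,
          Real.exp (-Real.pi * α * ∑ i, (M.mulVec (fun j => (k j : ℝ)) i + u i) ^ 2) ∧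
    (∑' n : Fin d → ℤ,
        Real.exp (-Real.pi * α * ∑ i, (D.mulVec (fun j => (n j : ℝ) + 1 / 2) i) ^ 2))
      = ∏ i, theta2 (c i ^ 2 * α) := by
  subst hD hM
  exact iwasawa_theta_lower_bound_general (fun i => (hc i).ne') hQ hT hTdiag u hα
end

section
/- Let d ≥ 2 and α > 0. For k ≥ 1 let A_k = diag(1,…,1,k,1/k) be the d×d diagonal matrix with d−2 entries equal to 1, one entry k and one entry 1/k. Then lim_{k→∞} Σ_{n∈ℤ^d} exp(−πα|A_k(n + (1/2,…,1/2))|²) = 0; equivalently, lim_{k→∞} θ₂(α)^{d−2}·θ₂(k²α)·θ₂(α/k²) = 0, where θ₂(x) = Σ_{n∈ℤ} e^{−πx(n+1/2)²}. -/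
/-!
The Gaussian of a sum of squares is a product over the coordinates, so the theta function of a
diagonal lattice `diag(a)` is `∏ i, θ₂(a i ^ 2 * α)`.

Since `(n + 1/2)² ≥ 1/4`, the bound `e^{-y} ≤ (m+1)! / y^{m+1}` gives `θ₂(x) = O(x^{-(m+1)})` on all
of `(0, ∞)`. Using `m = 0` for every factor already bounds the product by a constant over
`(det A)²`; using `m = 1` for one coordinate `j` gains a further factor `1 / (a j)²`. So the theta
function is `O(1 / (det A * a j)²)`, and for `A_k`, of determinant `1`, it is `O(1 / k²)`.
-/

open scoped BigOperators

open Filter Topology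

section ProductOfSeries

variable {R : Type*} [NormedCommRing R] [CompleteSpace R]

lemma summable_norm_and_hasSum_prod_pi_fin {d : ℕ} {κ : Fin d → Type*} (f : ∀ i, κ i → R)
    (hf : ∀ i, Summable fun n => ‖f i n‖) :
    (Summable fun n : ∀ i, κ i => ‖∏ i, f i (n i)‖) ∧
      HasSum (fun n : ∀ i, κ i => ∏ i, f i (n i)) (∏ i, ∑' n, f i n) := by
  induction d with
  | zero => exact ⟨.of_finite, by simp⟩
  | succ d ih =>
    obtain ⟨hsum, hhasSum⟩ := ih (fun i => f i.succ) fun i => hf i.succ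
    have hmul := (hf 0).mul_norm hsum
    have hmulSum := (hf 0).of_norm.hasSum.mul hhasSum hmul.of_norm
    have hcons (p : κ 0 × ∀ i : Fin d, κ i.succ) :
        ∏ i, f i (Fin.consEquiv κ p i) = f 0 p.1 * ∏ i, f i.succ (p.2 i) :=
      Fin.prod_univ_succ _
    rw [Fin.prod_univ_succ, ← (Fin.consEquiv κ).hasSum_iff, ← (Fin.consEquiv κ).summable_iff]
    simp only [Function.comp_def, hcons]
    exact ⟨hmul, hmulSum⟩

lemma hasSum_prod_pi {ι : Type*} [Fintype ι] {κ : ι → Type*} (f : ∀ i, κ i → R)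
    (hf : ∀ i, Summable fun n => ‖f i n‖) :
    HasSum (fun n : ∀ i, κ i => ∏ i, f i (n i)) (∏ i, ∑' n, f i n) := by
  let e := (Fintype.equivFin ι).symm
  have hcongr (n : ∀ i, κ (e i)) :
      ∏ j, f j (Equiv.piCongrLeft κ e n j) = ∏ i, f (e i) (n i) := by
    simp only [← e.prod_comp, Equiv.piCongrLeft_apply_apply]
  rw [← (Equiv.piCongrLeft κ e).hasSum_iff, ← e.prod_comp]
  simp only [Function.comp_def, hcongr]
  exact (summable_norm_and_hasSum_prod_pi_fin (fun i => f (e i)) fun i => hf (e i)).2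

end ProductOfSeries

lemma one_div_four_le_intCast_add_half_sq (n : ℤ) : 1 / 4 ≤ ((n : ℝ) + 1 / 2) ^ 2 := by
  have hn : (0 : ℝ) ≤ n ^ 2 + n := by
    have : 0 ≤ n ^ 2 + n := by nlinarith [Int.le_self_sq (-n)]
    exact_mod_cast this
  linarith

lemma exp_neg_mul_le_of_one_div_four_le {q y : ℝ} (hq : 1 / 4 ≤ q) (hy : 0 < y) (m : ℕ) :
    Real.exp (-(q * y)) ≤ (m + 1).factorial * 4 ^ m / y ^ (m + 1) * (1 / q) := by
  have : 0 < q := by linarith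
  have hqm : 1 ≤ (4 * q) ^ m := one_le_pow₀ (by linarith)
  calc Real.exp (-(q * y)) = (Real.exp (q * y))⁻¹ := Real.exp_neg _
    _ ≤ ((q * y) ^ (m + 1) / (m + 1).factorial)⁻¹ :=
        inv_anti₀ (by positivity) (Real.pow_div_factorial_le_exp _ (by positivity) _)
    _ = (m + 1).factorial / (y ^ (m + 1) * q ^ (m + 1)) := by
        rw [inv_div, mul_pow, mul_comm (q ^ _)]
    _ ≤ (m + 1).factorial / (y ^ (m + 1) * q ^ (m + 1)) * (4 * q) ^ m :=
        le_mul_of_one_le_right (by positivity) hqm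
    _ = (m + 1).factorial * 4 ^ m / y ^ (m + 1) * (1 / q) := by
        rw [mul_pow, pow_succ q]
        field_simp

section Theta2

/-- The constant `∑ n ∈ ℤ, 1 / (n + 1/2)²` in the power bounds for `θ₂`. -/
noncomputable def halfIntInvSqSum : ℝ :=
  ∑' n : ℤ, 1 / ((n : ℝ) + 1 / 2) ^ 2

lemma summable_one_div_intCast_add_half_sq :
    Summable fun n : ℤ => 1 / ((n : ℝ) + 1 / 2) ^ 2 := by
  simpa using (Real.summable_one_div_int_add_rpow (1 / 2) 2).2 one_lt_two

variable {x : ℝ}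

lemma theta2_term_le (hx : 0 < x) (m : ℕ) (n : ℤ) :
    Real.exp (-Real.pi * ((n : ℝ) + 1 / 2) ^ 2 * x) ≤
      (m + 1).factorial * 4 ^ m / (Real.pi * x) ^ (m + 1) * (1 / ((n : ℝ) + 1 / 2) ^ 2) := by
  convert exp_neg_mul_le_of_one_div_four_le (one_div_four_le_intCast_add_half_sq n)
    (mul_pos Real.pi_pos hx) m using 2
  ring

lemma summable_theta2_term (hx : 0 < x) :
    Summable fun n : ℤ => Real.exp (-Real.pi * ((n : ℝ) + 1 / 2) ^ 2 * x) :=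
  (summable_one_div_intCast_add_half_sq.mul_left _).of_nonneg_of_le
    (fun _ => (Real.exp_pos _).le) (theta2_term_le hx 0)

lemma theta2_nonneg (x : ℝ) : 0 ≤ theta2 x :=
  tsum_nonneg fun _ => (Real.exp_pos _).le

lemma theta2_le (hx : 0 < x) (m : ℕ) :
    theta2 x ≤ (m + 1).factorial * 4 ^ m / (Real.pi * x) ^ (m + 1) * halfIntInvSqSum := by
  rw [halfIntInvSqSum, ← tsum_mul_left]
  exact (summable_theta2_term hx).tsum_le_tsum (theta2_term_le hx m)
    (summable_one_div_intCast_add_half_sq.mul_left _)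

end Theta2

section DiagTheta

variable {ι : Type*} [Fintype ι] {a : ι → ℝ} {α : ℝ}

/-- The theta function `θ_{A(ℤ+1/2)^ι}(α)` of the translated lattice with diagonal matrix
`A = diag(a)`, which is encoded by its diagonal. -/
noncomputable def diagTheta (a : ι → ℝ) (α : ℝ) : ℝ :=
  ∑' n : ι → ℤ, Real.exp (-Real.pi * α * ∑ i, (a i * ((n i : ℝ) + 1 / 2)) ^ 2)

lemma diagTheta_eq_prod_theta2 (ha : ∀ i, a i ≠ 0) (hα : 0 < α) :
    diagTheta a α = ∏ i, theta2 (a i ^ 2 * α) := by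
  have hterm (n : ι → ℤ) :
      Real.exp (-Real.pi * α * ∑ i, (a i * ((n i : ℝ) + 1 / 2)) ^ 2) =
        ∏ i, Real.exp (-Real.pi * ((n i : ℝ) + 1 / 2) ^ 2 * (a i ^ 2 * α)) := by
    rw [← Real.exp_sum, Finset.mul_sum]
    congr! 2
    ring
  have hx (i : ι) : 0 < a i ^ 2 * α := mul_pos (sq_pos_of_ne_zero (ha i)) hα
  simp only [diagTheta, theta2, hterm]
  exact (hasSum_prod_pi
    (fun i (n : ℤ) => Real.exp (-Real.pi * ((n : ℝ) + 1 / 2) ^ 2 * (a i ^ 2 * α)))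
    fun i => (summable_theta2_term (hx i)).norm).tsum_eq

lemma diagTheta_nonneg (a : ι → ℝ) (α : ℝ) : 0 ≤ diagTheta a α :=
  tsum_nonneg fun _ => (Real.exp_pos _).le

lemma diagTheta_le (ha : ∀ i, a i ≠ 0) (hα : 0 < α) (j : ι) :
    diagTheta a α ≤ (halfIntInvSqSum / (Real.pi * α)) ^ Fintype.card ι * (8 / (Real.pi * α)) /
      ((∏ i, a i) * a j) ^ 2 := by
  classical
  have hfactor (i : ι) : theta2 (a i ^ 2 * α) ≤ halfIntInvSqSum / (Real.pi * α) / a i ^ 2 *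
      if i = j then 8 / (Real.pi * α) / a j ^ 2 else 1 := by
    have hx : 0 < a i ^ 2 * α := mul_pos (sq_pos_of_ne_zero (ha i)) hα
    have := ha i
    split_ifs with hij
    · subst hij
      refine (theta2_le hx 1).trans_eq ?_
      simp only [one_add_one_eq_two, Nat.factorial_two, Nat.cast_ofNat]
      field_simp
      ring
    · refine (theta2_le hx 0).trans_eq ?_
      field_simp
      norm_num
  calc diagTheta a α = ∏ i, theta2 (a i ^ 2 * α) := diagTheta_eq_prod_theta2 ha hα
    _ ≤ ∏ i, halfIntInvSqSum / (Real.pi * α) / a i ^ 2 *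
          (if i = j then 8 / (Real.pi * α) / a j ^ 2 else 1) :=
        Finset.prod_le_prod (fun _ _ => theta2_nonneg _) fun i _ => hfactor i
    _ = (halfIntInvSqSum / (Real.pi * α)) ^ Fintype.card ι / (∏ i, a i) ^ 2 *
          (8 / (Real.pi * α) / a j ^ 2) := by
        rw [Finset.prod_mul_distrib, Finset.prod_div_distrib, Finset.prod_const, Finset.prod_pow,
          Fintype.prod_ite_eq', Finset.card_univ]
    _ = _ := by rw [mul_pow, div_mul_div_comm]

theorem theta_degenerate_diagonal_general {β : Type*} {l : Filter β} {a : β → ι → ℝ} {j : β → ι}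
    (hα : 0 < α) (ha : Tendsto (fun b => |(∏ i, a b i) * a b (j b)|) l atTop) :
    Tendsto (fun b => diagTheta (a b) α) l (𝓝 0) := by
  have hlim : Tendsto (fun b => (halfIntInvSqSum / (Real.pi * α)) ^ Fintype.card ι *
      (8 / (Real.pi * α)) / ((∏ i, a b i) * a b (j b)) ^ 2) l (𝓝 0) := by
    simp only [← sq_abs (_ * a _ _)]
    exact ((tendsto_pow_atTop two_ne_zero).comp ha).const_div_atTop _
  refine squeeze_zero' (.of_forall fun b => diagTheta_nonneg (a b) α) ?_ hlim
  filter_upwards [ha.eventually_gt_atTop 0] with b hb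
  have hdet : ∏ i, a b i ≠ 0 := left_ne_zero_of_mul (abs_pos.mp hb)
  exact diagTheta_le (fun i => Finset.prod_ne_zero_iff.mp hdet i (Finset.mem_univ i)) hα (j b)

end DiagTheta

section DegenerateDiag

variable {d : ℕ}

/-- The diagonal of the matrix `A_t = diag(1, …, 1, t, 1/t)`, for a real parameter `t`. -/
noncomputable def degenerateDiag (d : ℕ) (t : ℝ) (i : Fin d) : ℝ :=
  if (i : ℕ) = d - 2 then t else if (i : ℕ) = d - 1 then 1 / t else 1

lemma prod_comp_degenerateDiag {M : Type*} [CommMonoid M] (hd : 2 ≤ d) (f : ℝ → M) (t : ℝ) :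
    ∏ i, f (degenerateDiag d t i) = f 1 ^ (d - 2) * f t * f (1 / t) := by
  obtain ⟨m, rfl⟩ := Nat.exists_eq_add_of_le' hd
  have hne (i : Fin m) : (i : ℕ) ≠ m ∧ (i : ℕ) ≠ m + 1 := by omega
  simp [degenerateDiag, Fin.prod_univ_castSucc, hne]

lemma prod_degenerateDiag (hd : 2 ≤ d) {t : ℝ} (ht : t ≠ 0) : ∏ i, degenerateDiag d t i = 1 := by
  simpa [ht] using prod_comp_degenerateDiag hd id t

lemma diagTheta_degenerateDiag (hd : 2 ≤ d) {t α : ℝ} (ht : t ≠ 0) (hα : 0 < α) :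
    diagTheta (degenerateDiag d t) α =
      theta2 α ^ (d - 2) * theta2 (t ^ 2 * α) * theta2 (α / t ^ 2) := by
  have hne (i : Fin d) : degenerateDiag d t i ≠ 0 :=
    Finset.prod_ne_zero_iff.mp (prod_degenerateDiag hd ht ▸ one_ne_zero) i (Finset.mem_univ i)
  rw [diagTheta_eq_prod_theta2 hne hα, prod_comp_degenerateDiag hd fun s => theta2 (s ^ 2 * α)]
  simp only [one_pow, one_mul, one_div, inv_pow, inv_mul_eq_div]

lemma tendsto_diagTheta_degenerateDiag (hd : 2 ≤ d) {α : ℝ} (hα : 0 < α) :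
    Tendsto (fun t => diagTheta (degenerateDiag d t) α) atTop (𝓝 0) := by
  refine theta_degenerate_diagonal_general (j := fun _ => ⟨d - 2, by omega⟩) hα ?_
  refine tendsto_id.congr' ?_
  filter_upwards [eventually_gt_atTop 0] with t ht
  rw [prod_degenerateDiag hd ht.ne', one_mul, degenerateDiag, if_pos rfl, abs_of_pos ht, id]

end DegenerateDiag

/-- with `A_k = diag(1,…,1,k,1/k)`,
`θ_{A_k(ℤ+1/2)^d}(α) = θ₂(α)^{d−2}·θ₂(k²α)·θ₂(α/k²) → 0` as `k → ∞`. -/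
theorem theta_degenerate_diagonal
    (d : ℕ) (hd : 2 ≤ d) (α : ℝ) (hα : 0 < α) :
    Filter.Tendsto (fun k : ℕ =>
        ∑' n : Fin d → ℤ,
          Real.exp (-Real.pi * α *
            ∑ i : Fin d,
              ((if (i : ℕ) = d - 2 then (k : ℝ)
                else if (i : ℕ) = d - 1 then 1 / (k : ℝ) else 1)
                  * ((n i : ℝ) + 1 / 2)) ^ 2))
      Filter.atTop (nhds 0) ∧
    Filter.Tendsto (fun k : ℕ =>
        theta2 α ^ (d - 2) * theta2 ((k : ℝ) ^ 2 * α) * theta2 (α / (k : ℝ) ^ 2))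
      Filter.atTop (nhds 0) := by
  have hlim := (tendsto_diagTheta_degenerateDiag hd hα).comp tendsto_natCast_atTop_atTop
  -- `k = 0` is excluded from the factorization: there `1 / k` is a junk value.
  exact ⟨hlim, hlim.congr' <| (eventually_ne_atTop 0).mono fun k hk =>
    diagTheta_degenerateDiag hd (Nat.cast_ne_zero.mpr hk) hα⟩
end

section
/- Let d ≥ 1 and α > 0. Assume c₁,…,c_d > 0 satisfy ∏_{i=1}^d c_i = 1 and not all c_i equal 1. Define U₄(t) = ∏_{i=1}^{d} θ₄(c_i^t α) for t ∈ ℝ, where θ₄(x) = Σ_{k∈ℤ} (−1)^k e^{−πk²x}. Then U₄'(0) = 0, U₄'(t) > 0 for t < 0, and U₄'(t) < 0 for t > 0; in particular t = 0 is the unique strict maximum of U₄. -/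
/-!
In the variable `s = log x`, the function `log θ₄` is strictly concave. Jacobi's triple product
gives `θ₄(x) = (q²; q²)_∞ (q; q²)_∞²` with `q = e^{-πx}`, so `log θ₄(e^s)` is a sum of terms
`log (1 - e^{-c e^s})` with `c > 0`. The derivative of such a term is `u / (e^u - 1)` for
`u = c e^s`, the reciprocal of a secant slope of `exp`, hence strictly decreasing.

With `F(s) = log θ₄(e^s)`, the function `log U₄(t) = ∑ F(t log cᵢ + log α)` is therefore strictly
concave, and its derivative at `0` is `F'(log α) ∑ log cᵢ = F'(log α) log ∏ cᵢ = 0`.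

The triple product itself is the limit, by dominated convergence over `k`, of the finite identity
`∏_{i<N} (1 + z q^{2i+1}) (1 + z⁻¹ q^{2i+1}) = ∑_k z^k q^{k²} [2N choose N+k]_{q²}`.
-/

open scoped BigOperators

/-- The classical Jacobi theta function `θ₄(x) = Σ_{k∈ℤ} (−1)^k e^{−πk²x}`. -/
noncomputable def theta4 (x : ℝ) : ℝ :=
  ∑' n : ℤ, (-1 : ℝ) ^ n * Real.exp (-Real.pi * (n : ℝ) ^ 2 * x)

open Filter Topology

section QBinomial

variable {R : Type*} [CommRing R]

/-- The finite `q`-Pochhammer symbol `(a; q)_n`, a partial product of `qPochhammerInf a q`. -/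
def qPochhammer (a q : R) (n : ℕ) : R :=
  ∏ i ∈ Finset.range n, (1 - a * q ^ i)

lemma qPochhammer_zero (a q : R) : qPochhammer a q 0 = 1 :=
  Finset.prod_range_zero _

lemma qPochhammer_succ (a q : R) (n : ℕ) :
    qPochhammer a q (n + 1) = qPochhammer a q n * (1 - a * q ^ n) :=
  Finset.prod_range_succ _ _

variable {K : Type*} [Field K] {q z : K}

/-- The reciprocal `1 / (q; q)_m` for an integer `m`, from which `qBinom` is built. Its value `0` at
negative `m` makes `invQPochhammer_sub_one` hold for all integers. -/
def invQPochhammer (q : K) : ℤ → K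
  | .ofNat n => (qPochhammer q q n)⁻¹
  | .negSucc _ => 0

lemma invQPochhammer_natCast (q : K) (n : ℕ) : invQPochhammer q n = (qPochhammer q q n)⁻¹ :=
  rfl

lemma invQPochhammer_of_neg (q : K) {m : ℤ} (hm : m < 0) : invQPochhammer q m = 0 := by
  obtain ⟨n, rfl⟩ := Int.eq_negSucc_of_lt_zero hm
  rfl

lemma invQPochhammer_sub_one (hq : ∀ n : ℕ, q ^ (n + 1) ≠ 1) (m : ℤ) :
    invQPochhammer q (m - 1) = (1 - q ^ m) * invQPochhammer q m := by
  rcases lt_trichotomy m 0 with hm | rfl | hm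
  · rw [invQPochhammer_of_neg q hm, invQPochhammer_of_neg q (by lia), mul_zero]
  · rw [invQPochhammer_of_neg q (by lia), zpow_zero, sub_self, zero_mul]
  · obtain ⟨n, rfl⟩ : ∃ n : ℕ, m = n + 1 := ⟨(m - 1).toNat, by lia⟩
    have hfactor : 1 - q ^ (n + 1) ≠ 0 := sub_ne_zero.2 (hq n).symm
    rw [add_sub_cancel_right, ← Nat.cast_succ, invQPochhammer_natCast, invQPochhammer_natCast,
      zpow_natCast, qPochhammer_succ, ← pow_succ', mul_inv, mul_left_comm,
      mul_inv_cancel₀ hfactor, mul_one]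

/-- The Gaussian binomial coefficient `[n choose m]_q`, for an integer `m`; it is `0` unless
`0 ≤ m ≤ n`, so that the finite triple product can be summed over all of `ℤ`. -/
def qBinom (q : K) (n : ℕ) (m : ℤ) : K :=
  qPochhammer q q n * (invQPochhammer q m * invQPochhammer q (n - m))

lemma qBinom_zero_zero (q : K) : qBinom q 0 0 = 1 := by
  have hzero : invQPochhammer q 0 = 1 := by
    rw [← Nat.cast_zero, invQPochhammer_natCast, qPochhammer_zero, inv_one]
  simp [qBinom, hzero, qPochhammer_zero]

lemma qBinom_zero_of_ne_zero (q : K) {m : ℤ} (hm : m ≠ 0) : qBinom q 0 m = 0 := by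
  rcases hm.lt_or_gt with hm | hm
  · simp [qBinom, invQPochhammer_of_neg q hm]
  · simp [qBinom, invQPochhammer_of_neg q (neg_lt_zero.2 hm)]

lemma qBinom_succ (hq₀ : q ≠ 0) (hq : ∀ n : ℕ, q ^ (n + 1) ≠ 1) (n : ℕ) (m : ℤ) :
    qBinom q (n + 1) m = qBinom q n (m - 1) + q ^ m * qBinom q n m := by
  have hsub : (n : ℤ) - m = n + 1 - m - 1 := by ring
  have hpow : q * q ^ n = q ^ m * q ^ (n + 1 - m : ℤ) := by
    rw [← zpow_add₀ hq₀, ← pow_succ', ← zpow_natCast]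
    congr 1
    push_cast
    ring
  rw [qBinom, qBinom, qBinom, qPochhammer_succ, invQPochhammer_sub_one hq m, hsub,
    invQPochhammer_sub_one hq (n + 1 - m), hpow, Nat.cast_succ,
    show (n : ℤ) - (m - 1) = n + 1 - m by ring]
  ring

lemma qBinom_symm (q : K) (n : ℕ) (m : ℤ) : qBinom q n (n - m) = qBinom q n m := by
  rw [qBinom, qBinom, sub_sub_cancel, mul_comm (invQPochhammer q m)]

lemma qBinom_succ' (hq₀ : q ≠ 0) (hq : ∀ n : ℕ, q ^ (n + 1) ≠ 1) (n : ℕ) (m : ℤ) :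
    qBinom q (n + 1) m = q ^ (n + 1 - m : ℤ) * qBinom q n (m - 1) + qBinom q n m := by
  rw [← qBinom_symm, qBinom_succ hq₀ hq, ← qBinom_symm q n (m - 1), ← qBinom_symm q n m,
    Nat.cast_succ, show (n : ℤ) + 1 - m - 1 = n - m by ring,
    show (n : ℤ) - (m - 1) = n + 1 - m by ring, add_comm]

lemma qBinom_add_two (hq₀ : q ≠ 0) (hq : ∀ n : ℕ, q ^ (n + 1) ≠ 1) (n : ℕ) (m : ℤ) :
    qBinom q (n + 2) (m + 1) = (1 + q ^ (n + 1)) * qBinom q n m +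
      (q ^ (n + 1 - m : ℤ) * qBinom q n (m - 1) + q ^ (m + 1) * qBinom q n (m + 1)) := by
  have hpow : q ^ (n + 1) = q ^ (m + 1) * q ^ (n - m : ℤ) := by
    rw [← zpow_add₀ hq₀, ← zpow_natCast]
    congr 1
    push_cast
    ring
  rw [qBinom_succ hq₀ hq, qBinom_succ' hq₀ hq n (m + 1), add_sub_cancel_right,
    qBinom_succ' hq₀ hq n m, hpow, show (n : ℤ) + 1 - (m + 1) = n - m by ring]
  ring

/-- Comparison of the coefficients of `z ^ k` when the finite triple product is multiplied by
`(1 + z q ^ (2N + 1)) (1 + z⁻¹ q ^ (2N + 1))`. -/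
lemma zpow_sq_mul_qBinom_succ (hq₀ : q ≠ 0) (hq : ∀ n : ℕ, (q ^ 2) ^ (n + 1) ≠ 1)
    (N : ℕ) (k : ℤ) :
    q ^ k ^ 2 * qBinom (q ^ 2) (2 * (N + 1)) ((N + 1 : ℕ) + k) =
      (1 + q ^ (4 * N + 2)) * (q ^ k ^ 2 * qBinom (q ^ 2) (2 * N) (N + k)) +
      q ^ (2 * N + 1) * (q ^ (k - 1) ^ 2 * qBinom (q ^ 2) (2 * N) (N + (k - 1)) +
        q ^ (k + 1) ^ 2 * qBinom (q ^ 2) (2 * N) (N + (k + 1))) := by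
  have hshift {a b c : ℤ} (h : 2 * N + 1 + a = b + 2 * c) :
      q ^ (2 * N + 1) * q ^ a = q ^ b * (q ^ 2) ^ c := by
    rw [← zpow_natCast, ← zpow_ofNat, ← zpow_mul, ← zpow_add₀ hq₀, ← zpow_add₀ hq₀]
    exact congrArg (q ^ ·) (mod_cast h)
  have hbelow : q ^ (2 * N + 1) * q ^ (k - 1) ^ 2 =
      q ^ k ^ 2 * (q ^ 2) ^ ((2 * N : ℕ) + 1 - (N + k) : ℤ) := hshift (by push_cast; ring)
  have habove : q ^ (2 * N + 1) * q ^ (k + 1) ^ 2 = q ^ k ^ 2 * (q ^ 2) ^ ((N + k) + 1 : ℤ) :=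
    hshift (by ring)
  have hrec := qBinom_add_two (pow_ne_zero 2 hq₀) hq (2 * N) (N + k)
  rw [← mul_add_one 2 N] at hrec
  rw [Nat.cast_succ, add_right_comm, ← add_sub_assoc, ← add_assoc (N : ℤ)]
  linear_combination q ^ k ^ 2 * hrec - qBinom (q ^ 2) (2 * N) (N + k - 1) * hbelow
    - qBinom (q ^ 2) (2 * N) (N + k + 1) * habove

lemma hasSum_finite_jacobi_triple_product [TopologicalSpace K] [IsTopologicalRing K]
    (hq₀ : q ≠ 0) (hq : ∀ n : ℕ, (q ^ 2) ^ (n + 1) ≠ 1) (hz : z ≠ 0) (N : ℕ) :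
    HasSum (fun k : ℤ ↦ z ^ k * (q ^ k ^ 2 * qBinom (q ^ 2) (2 * N) (N + k)))
      (qPochhammer (-(z * q)) (q ^ 2) N * qPochhammer (-(z⁻¹ * q)) (q ^ 2) N) := by
  induction N with
  | zero =>
    convert hasSum_single (0 : ℤ) fun k hk ↦ ?_ using 1
    · simp [qPochhammer_zero, qBinom_zero_zero]
    · simp [qBinom_zero_of_ne_zero _ hk]
  | succ N ih =>
    have hbelow := (Equiv.subRight (1 : ℤ)).hasSum_iff.2 ih
    have habove := (Equiv.addRight (1 : ℤ)).hasSum_iff.2 ih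
    have hsum := (ih.mul_left (1 + q ^ (4 * N + 2))).add
      (((hbelow.mul_left z).add (habove.mul_left z⁻¹)).mul_left (q ^ (2 * N + 1)))
    have hprod : (1 - -(z * q) * (q ^ 2) ^ N) * (1 - -(z⁻¹ * q) * (q ^ 2) ^ N) =
        1 + q ^ (4 * N + 2) + q ^ (2 * N + 1) * (z + z⁻¹) := by
      field_simp
      ring
    rw [qPochhammer_succ, qPochhammer_succ, mul_mul_mul_comm, hprod]
    convert! hsum using 1
    · ext k
      simp only [zpow_sq_mul_qBinom_succ hq₀ hq, Function.comp_apply, Equiv.subRight_apply,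
        Equiv.coe_addRight, zpow_sub_one₀ hz, zpow_add_one₀ hz]
      field_simp
    · ring

end QBinomial

section TripleProduct

variable {𝕜 : Type*} [NormedField 𝕜] {a q z : 𝕜}

/-- The infinite `q`-Pochhammer symbol `(a; q)_∞`, in which the triple product is expressed. It
is meaningful for `‖q‖ < 1`, where the product converges. -/
noncomputable def qPochhammerInf (a q : 𝕜) : 𝕜 :=
  ∏' i : ℕ, (1 - a * q ^ i)

lemma norm_mul_pow_lt_one (ha : ‖a‖ < 1) (hq : ‖q‖ ≤ 1) (i : ℕ) : ‖a * q ^ i‖ < 1 := by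
  rw [norm_mul, norm_pow]
  exact mul_lt_one_of_nonneg_of_lt_one_left (norm_nonneg a) ha (pow_le_one₀ (norm_nonneg q) hq)

lemma one_sub_mul_pow_ne_zero (ha : ‖a‖ < 1) (hq : ‖q‖ ≤ 1) (i : ℕ) : 1 - a * q ^ i ≠ 0 :=
  sub_ne_zero.2 fun h ↦ (norm_mul_pow_lt_one ha hq i).ne (by rw [← h, norm_one])

lemma summable_norm_neg_mul_pow (a : 𝕜) (hq : ‖q‖ < 1) :
    Summable fun i : ℕ ↦ ‖-(a * q ^ i)‖ := by
  simpa only [norm_neg, norm_mul, norm_pow] using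
    (summable_geometric_of_lt_one (norm_nonneg q) hq).mul_left ‖a‖

/-- The summands are the absolute values of those of a two-variable Jacobi theta series. -/
lemma summable_norm_zpow_mul_zpow_sq (hq₀ : q ≠ 0) (hq : ‖q‖ < 1) (hz : z ≠ 0) :
    Summable fun k : ℤ ↦ ‖z ^ k * q ^ k ^ 2‖ := by
  have hlog : Real.log ‖q‖ < 0 := Real.log_neg (norm_pos_iff.2 hq₀) hq
  let τ : ℂ := (-Real.log ‖q‖ / Real.pi : ℝ) * Complex.I
  let w : ℂ := (-Real.log ‖z‖ / (2 * Real.pi) : ℝ) * Complex.I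
  have hτ : 0 < τ.im := by
    simpa [τ] using div_pos (neg_pos.2 hlog) Real.pi_pos
  refine ((summable_jacobiTheta₂_term_iff w τ).2 hτ).norm.congr fun k ↦ ?_
  have hexp (x : 𝕜) (hx : x ≠ 0) (m : ℤ) : ‖x ^ m‖ = Real.exp (m * Real.log ‖x‖) := by
    rw [norm_zpow, ← Real.log_zpow, Real.exp_log (zpow_pos (norm_pos_iff.2 hx) m)]
  rw [norm_jacobiTheta₂_term, norm_mul, hexp z hz, hexp q hq₀, ← Real.exp_add]
  simp only [τ, w, Complex.im_ofReal_mul, Complex.I_im]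
  congr 1
  push_cast
  field_simp
  ring

variable [CompleteSpace 𝕜]

lemma tendsto_qPochhammer (a : 𝕜) (hq : ‖q‖ < 1) :
    Tendsto (qPochhammer a q) atTop (𝓝 (qPochhammerInf a q)) := by
  have h := multipliable_one_add_of_summable (summable_norm_neg_mul_pow a hq)
  simp only [← sub_eq_add_neg] at h
  exact h.hasProd.tendsto_prod_nat

lemma qPochhammerInf_ne_zero (ha : ‖a‖ < 1) (hq : ‖q‖ < 1) : qPochhammerInf a q ≠ 0 := by
  have h := tprod_one_add_ne_zero_of_summable (f := fun i : ℕ ↦ -(a * q ^ i))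
    (by simpa only [← sub_eq_add_neg] using one_sub_mul_pow_ne_zero ha hq.le)
    (summable_norm_neg_mul_pow a hq)
  simp only [← sub_eq_add_neg] at h
  exact h

lemma tendsto_invQPochhammer (hq : ‖q‖ < 1) :
    Tendsto (invQPochhammer q) atTop (𝓝 (qPochhammerInf q q)⁻¹) := by
  rw [← Nat.map_cast_int_atTop, tendsto_map'_iff]
  exact (tendsto_qPochhammer q hq).inv₀ (qPochhammerInf_ne_zero hq hq)

lemma exists_norm_invQPochhammer_le (hq : ‖q‖ < 1) : ∃ C, ∀ m, ‖invQPochhammer q m‖ ≤ C := by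
  have hlim := (tendsto_qPochhammer q hq).inv₀ (qPochhammerInf_ne_zero hq hq)
  obtain ⟨C, hC⟩ := (Metric.isBounded_range_of_tendsto _ hlim).exists_norm_le
  refine ⟨C, fun m ↦ ?_⟩
  cases m with
  | ofNat n => exact hC _ ⟨n, rfl⟩
  | negSucc n => exact norm_zero.trans_le ((norm_nonneg _).trans (hC _ ⟨0, rfl⟩))

lemma exists_norm_qBinom_le (hq : ‖q‖ < 1) : ∃ C, ∀ n m, ‖qBinom q n m‖ ≤ C := by
  obtain ⟨A, hA⟩ := (Metric.isBounded_range_of_tendsto _ (tendsto_qPochhammer q hq)).exists_norm_le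
  obtain ⟨B, hB⟩ := exists_norm_invQPochhammer_le hq
  refine ⟨A * (B * B), fun n m ↦ ?_⟩
  have hA₀ : ‖qPochhammer q q n‖ ≤ A := hA _ ⟨n, rfl⟩
  have hB₀ : 0 ≤ B := (norm_nonneg _).trans (hB 0)
  rw [qBinom, norm_mul, norm_mul]
  exact mul_le_mul hA₀ (mul_le_mul (hB _) (hB _) (norm_nonneg _) hB₀)
    (mul_nonneg (norm_nonneg _) (norm_nonneg _)) ((norm_nonneg _).trans hA₀)

lemma tendsto_qBinom_two_mul (hq : ‖q‖ < 1) (k : ℤ) :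
    Tendsto (fun N : ℕ ↦ qBinom q (2 * N) (N + k)) atTop (𝓝 (qPochhammerInf q q)⁻¹) := by
  have hatTop (j : ℤ) : Tendsto (fun N : ℕ ↦ (N : ℤ) + j) atTop atTop :=
    tendsto_atTop_add_const_right _ j tendsto_natCast_atTop_atTop
  have hsub (N : ℕ) : ((2 * N : ℕ) : ℤ) - (N + k) = N + -k := by push_cast; ring
  have hinv := tendsto_invQPochhammer hq
  have hnum := (tendsto_qPochhammer q hq).comp (tendsto_id.const_mul_atTop' (r := 2) two_pos)
  have h := hnum.mul ((hinv.comp (hatTop k)).mul (hinv.comp (hatTop (-k))))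
  rw [mul_inv_cancel_left₀ (qPochhammerInf_ne_zero hq hq)] at h
  refine h.congr fun N ↦ ?_
  rw [qBinom, hsub]
  rfl

theorem jacobi_triple_product (hq₀ : q ≠ 0) (hq : ‖q‖ < 1) (hz : z ≠ 0) :
    ∑' k : ℤ, z ^ k * q ^ k ^ 2 = qPochhammerInf (q ^ 2) (q ^ 2) *
      (qPochhammerInf (-(z * q)) (q ^ 2) * qPochhammerInf (-(z⁻¹ * q)) (q ^ 2)) := by
  have hq₂ : ‖q ^ 2‖ < 1 := by
    rw [norm_pow]
    exact pow_lt_one₀ (norm_nonneg q) hq two_ne_zero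
  have hroot (n : ℕ) : (q ^ 2) ^ (n + 1) ≠ 1 := by
    rw [pow_succ', ne_comm, ← sub_ne_zero]
    exact one_sub_mul_pow_ne_zero hq₂ hq₂.le n
  obtain ⟨C, hC⟩ := exists_norm_qBinom_le hq₂
  have hsum : Tendsto (fun N : ℕ ↦ ∑' k : ℤ, z ^ k * (q ^ k ^ 2 * qBinom (q ^ 2) (2 * N) (N + k)))
      atTop (𝓝 (∑' k : ℤ, z ^ k * q ^ k ^ 2 * (qPochhammerInf (q ^ 2) (q ^ 2))⁻¹)) := by
    simp only [← mul_assoc]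
    refine tendsto_tsum_of_dominated_convergence
      ((summable_norm_zpow_mul_zpow_sq hq₀ hq hz).mul_right C)
      (fun k ↦ (tendsto_qBinom_two_mul hq₂ k).const_mul _) (.of_forall fun N k ↦ ?_)
    rw [norm_mul]
    exact mul_le_mul_of_nonneg_left (hC _ _) (norm_nonneg _)
  have hprod := (tendsto_qPochhammer (-(z * q)) hq₂).mul (tendsto_qPochhammer (-(z⁻¹ * q)) hq₂)
  simp only [(hasSum_finite_jacobi_triple_product hq₀ hroot hz _).tsum_eq, tsum_mul_right] at hsum
  rw [← tendsto_nhds_unique hsum hprod, mul_comm,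
    inv_mul_cancel_right₀ (qPochhammerInf_ne_zero hq₂ hq₂)]

end TripleProduct

section Convexity

variable {E : Type*} [AddCommMonoid E] [Module ℝ E] {s : Set E}

lemma strictConcaveOn_of_hasSum {ι : Type*} {f : ι → E → ℝ} {g : E → ℝ} {i₀ : ι}
    (hf : ∀ i, ConcaveOn ℝ s (f i)) (hf₀ : StrictConcaveOn ℝ s (f i₀))
    (hg : ∀ x ∈ s, HasSum (fun i ↦ f i x) (g x)) : StrictConcaveOn ℝ s g := by
  refine ⟨hf₀.1, fun x hx y hy hxy a b ha hb hab ↦ ?_⟩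
  exact hasSum_lt (fun i ↦ (hf i).2 hx hy ha.le hb.le hab) (hf₀.2 hx hy hxy ha hb hab)
    (((hg x hx).const_smul a).add ((hg y hy).const_smul b))
    (hg _ (hf₀.1 hx hy ha.le hb.le hab))

lemma strictConcaveOn_univ_comp_mul_add {f : ℝ → ℝ} (hf : StrictConcaveOn ℝ Set.univ f) {a : ℝ}
    (ha : a ≠ 0) (b : ℝ) : StrictConcaveOn ℝ Set.univ fun t ↦ f (t * a + b) := by
  refine ⟨convex_univ, fun x _ y _ hxy μ ν hμ hν hμν ↦ ?_⟩
  have hne : x * a + b ≠ y * a + b := fun h ↦ hxy (mul_right_cancel₀ ha (add_right_cancel h))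
  convert hf.2 (Set.mem_univ _) (Set.mem_univ _) hne hμ hν hμν using 2
  simp only [smul_eq_mul]
  linear_combination -b * hμν

lemma strictConcaveOn_sum_comp_mul_add {ι : Type*} [Fintype ι] {f : ℝ → ℝ}
    (hf : StrictConcaveOn ℝ Set.univ f) {a : ι → ℝ} (ha : ∃ i, a i ≠ 0) (b : ℝ) :
    StrictConcaveOn ℝ Set.univ fun t ↦ ∑ i, f (t * a i + b) := by
  obtain ⟨i₀, hi₀⟩ := ha
  refine strictConcaveOn_of_hasSum (fun i ↦ ?_) (strictConcaveOn_univ_comp_mul_add hf hi₀ b)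
    fun t _ ↦ hasSum_fintype fun i ↦ f (t * a i + b)
  rcases eq_or_ne (a i) 0 with hi | hi
  · simpa only [hi, mul_zero] using concaveOn_const (f (0 + b)) convex_univ
  · exact (strictConcaveOn_univ_comp_mul_add hf hi b).concaveOn

lemma hasDerivAt_sum_comp_mul_add_zero {ι : Type*} [Fintype ι] {f : ℝ → ℝ} {a : ι → ℝ} {b : ℝ}
    (hf : DifferentiableAt ℝ f b) (ha : ∑ i, a i = 0) :
    HasDerivAt (fun t ↦ ∑ i, f (t * a i + b)) 0 0 := by
  have hterm (i : ι) : HasDerivAt (fun t ↦ f (t * a i + b)) (deriv f b * a i) 0 := by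
    have hinner : HasDerivAt (fun t ↦ t * a i + b) (a i) 0 := by
      simpa using ((hasDerivAt_id (0 : ℝ)).mul_const (a i)).add_const b
    exact hf.hasDerivAt.comp_of_eq 0 hinner (by simp)
  simpa [← Finset.mul_sum, ha] using HasDerivAt.fun_sum fun i (_ : i ∈ Finset.univ) ↦ hterm i

lemma lt_of_deriv_pos_of_deriv_neg {f : ℝ → ℝ} {a t : ℝ} (hf : Continuous f)
    (hpos : ∀ x < a, 0 < deriv f x) (hneg : ∀ x, a < x → deriv f x < 0) (ht : t ≠ a) :
    f t < f a := by
  rcases ht.lt_or_gt with ht | ht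
  · exact strictMonoOn_of_deriv_pos (convex_Iic a) hf.continuousOn
      (by simpa using hpos) ht.le Set.self_mem_Iic ht
  · exact strictAntiOn_of_deriv_neg (convex_Ici a) hf.continuousOn
      (by simpa using hneg) Set.self_mem_Ici ht.le ht

end Convexity

section RealPochhammer

variable {a q : ℝ}

lemma one_sub_mul_pow_pos (ha : ‖a‖ < 1) (hq : ‖q‖ ≤ 1) (i : ℕ) : 0 < 1 - a * q ^ i :=
  sub_pos.2 ((Real.le_norm_self _).trans_lt (norm_mul_pow_lt_one ha hq i))

lemma summable_log_one_sub_mul_pow (a : ℝ) (hq : ‖q‖ < 1) :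
    Summable fun i : ℕ ↦ Real.log (1 - a * q ^ i) := by
  simpa only [← sub_eq_add_neg] using
    Real.summable_log_one_add_of_summable (summable_norm_neg_mul_pow a hq).of_norm

lemma exp_tsum_log_one_sub_mul_pow (ha : ‖a‖ < 1) (hq : ‖q‖ < 1) :
    Real.exp (∑' i : ℕ, Real.log (1 - a * q ^ i)) = qPochhammerInf a q :=
  Real.rexp_tsum_eq_tprod (one_sub_mul_pow_pos ha hq.le) (summable_log_one_sub_mul_pow a hq)

lemma qPochhammerInf_pos (ha : ‖a‖ < 1) (hq : ‖q‖ < 1) : 0 < qPochhammerInf a q :=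
  exp_tsum_log_one_sub_mul_pow ha hq ▸ Real.exp_pos _

lemma hasSum_log_one_sub_mul_pow (ha : ‖a‖ < 1) (hq : ‖q‖ < 1) :
    HasSum (fun i : ℕ ↦ Real.log (1 - a * q ^ i)) (Real.log (qPochhammerInf a q)) := by
  rw [← exp_tsum_log_one_sub_mul_pow ha hq, Real.log_exp]
  exact (summable_log_one_sub_mul_pow a hq).hasSum

end RealPochhammer

section LogConcavity

lemma norm_exp_neg_mul_lt_one {c x : ℝ} (hc : 0 < c) (hx : 0 < x) :
    ‖Real.exp (-(c * x))‖ < 1 := by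
  rw [Real.norm_eq_abs, Real.abs_exp, Real.exp_lt_one_iff, neg_lt_zero]
  exact mul_pos hc hx

lemma strictConcaveOn_log_one_sub_exp_neg_exp :
    StrictConcaveOn ℝ Set.univ fun s ↦ Real.log (1 - Real.exp (-Real.exp s)) := by
  have hpos (x : ℝ) : 0 < Real.exp (Real.exp x) - Real.exp 0 := by simpa using Real.exp_pos x
  have hderiv (s : ℝ) : HasDerivAt (fun s ↦ Real.log (1 - Real.exp (-Real.exp s)))
      (((Real.exp (Real.exp s) - Real.exp 0) / (Real.exp s - 0))⁻¹) s := by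
    have hlog : 0 < 1 - Real.exp (-Real.exp s) := by simpa using Real.exp_pos s
    refine (((Real.hasDerivAt_exp s).fun_neg.exp.const_sub 1).log hlog.ne').congr_deriv ?_
    have hne := (hpos s).ne'
    rw [Real.exp_zero] at hne ⊢
    rw [Real.exp_neg, sub_zero]
    field_simp
  refine StrictAnti.strictConcaveOn_univ_of_deriv
    (continuous_iff_continuousAt.2 fun s ↦ (hderiv s).continuousAt) fun s t hst ↦ ?_
  rw [(hderiv s).deriv, (hderiv t).deriv]
  -- the derivative is the reciprocal of a secant slope of `exp` based at `0`
  refine inv_strictAnti₀ (div_pos (hpos s) (by simpa using Real.exp_pos s)) ?_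
  exact strictConvexOn_exp.secant_strict_mono (Set.mem_univ _) (Set.mem_univ _) (Set.mem_univ _)
    (Real.exp_pos s).ne' (Real.exp_pos t).ne' (Real.exp_lt_exp.2 hst)

lemma strictConcaveOn_log_one_sub_exp_neg_mul_exp {c : ℝ} (hc : 0 < c) :
    StrictConcaveOn ℝ Set.univ fun s ↦ Real.log (1 - Real.exp (-(c * Real.exp s))) := by
  convert! strictConcaveOn_log_one_sub_exp_neg_exp.translate_left (Real.log c) using 2 with s
  simp [Real.exp_add, Real.exp_log hc, mul_comm]

lemma strictConcaveOn_log_qPochhammerInf {a b : ℝ} (ha : 0 < a) (hb : 0 < b) :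
    StrictConcaveOn ℝ Set.univ fun s ↦
      Real.log (qPochhammerInf (Real.exp (-(a * Real.exp s))) (Real.exp (-(b * Real.exp s)))) := by
  have hfactor (i : ℕ) : StrictConcaveOn ℝ Set.univ fun s ↦ Real.log
      (1 - Real.exp (-(a * Real.exp s)) * Real.exp (-(b * Real.exp s)) ^ i) := by
    convert strictConcaveOn_log_one_sub_exp_neg_mul_exp (c := a + i * b) (by positivity) using 4
    rw [← Real.exp_nat_mul, ← Real.exp_add]
    ring_nf
  exact strictConcaveOn_of_hasSum (fun i ↦ (hfactor i).concaveOn) (hfactor 0) fun s _ ↦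
    hasSum_log_one_sub_mul_pow (norm_exp_neg_mul_lt_one ha (Real.exp_pos s))
      (norm_exp_neg_mul_lt_one hb (Real.exp_pos s))

end LogConcavity

section Theta4

lemma theta4_eq_qPochhammerInf {x : ℝ} (hx : 0 < x) :
    theta4 x = qPochhammerInf (Real.exp (-(2 * Real.pi * x))) (Real.exp (-(2 * Real.pi * x))) *
      qPochhammerInf (Real.exp (-(Real.pi * x))) (Real.exp (-(2 * Real.pi * x))) ^ 2 := by
  have hsq : Real.exp (-(Real.pi * x)) ^ 2 = Real.exp (-(2 * Real.pi * x)) := by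
    rw [← Real.exp_nat_mul]
    ring_nf
  have hterm (k : ℤ) : Real.exp (-Real.pi * (k : ℝ) ^ 2 * x) =
      Real.exp (-(Real.pi * x)) ^ k ^ 2 := by
    rw [← Real.rpow_intCast, ← Real.exp_mul]
    push_cast
    ring_nf
  have h := jacobi_triple_product (z := (-1 : ℝ)) (Real.exp_ne_zero _)
    (norm_exp_neg_mul_lt_one Real.pi_pos hx) (by norm_num)
  rw [inv_neg_one, neg_one_mul, neg_neg, hsq, ← sq] at h
  simp only [theta4, hterm, h]

lemma theta4_pos {x : ℝ} (hx : 0 < x) : 0 < theta4 x := by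
  have hpos {a : ℝ} (ha : 0 < a) := qPochhammerInf_pos (norm_exp_neg_mul_lt_one ha hx)
    (norm_exp_neg_mul_lt_one Real.two_pi_pos hx)
  rw [theta4_eq_qPochhammerInf hx]
  exact mul_pos (hpos Real.two_pi_pos) (pow_pos (hpos Real.pi_pos) 2)

lemma ofReal_theta4 (x : ℝ) : (theta4 x : ℂ) = jacobiTheta₂ (1 / 2) (x * Complex.I) := by
  rw [theta4, Complex.ofReal_tsum, jacobiTheta₂]
  refine tsum_congr fun n ↦ ?_
  have hsign : (-1 : ℂ) ^ n = Complex.exp (2 * Real.pi * Complex.I * n * (1 / 2)) := by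
    rw [← Complex.exp_pi_mul_I, ← Complex.exp_int_mul]
    ring_nf
  rw [jacobiTheta₂_term, Complex.exp_add, ← hsign]
  push_cast
  congr 2
  linear_combination -(Real.pi * (n : ℂ) ^ 2 * x) * Complex.I_sq

lemma differentiableAt_theta4 {x : ℝ} (hx : 0 < x) : DifferentiableAt ℝ theta4 x := by
  have hcomplex : DifferentiableAt ℂ (fun z : ℂ ↦ jacobiTheta₂ (1 / 2) (z * Complex.I)) x :=
    (differentiableAt_jacobiTheta₂_snd (1 / 2) (by simpa using hx)).comp (x : ℂ)
      (differentiableAt_id.mul_const Complex.I)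
  have hreal := hcomplex.hasDerivAt.real_of_complex.differentiableAt
  simpa only [← ofReal_theta4, Complex.ofReal_re] using hreal

/-- The logarithm of `θ₄` in the exponential variable, `s ↦ log θ₄(e^s)`, in which
it is strictly concave. -/
noncomputable def logTheta4 (s : ℝ) : ℝ :=
  Real.log (theta4 (Real.exp s))

lemma exp_logTheta4 (s : ℝ) : Real.exp (logTheta4 s) = theta4 (Real.exp s) :=
  Real.exp_log (theta4_pos (Real.exp_pos s))

lemma differentiable_logTheta4 : Differentiable ℝ logTheta4 := fun s ↦
  ((differentiableAt_theta4 (Real.exp_pos s)).comp s Real.differentiableAt_exp).log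
    (theta4_pos (Real.exp_pos s)).ne'

lemma strictConcaveOn_logTheta4 : StrictConcaveOn ℝ Set.univ logTheta4 := by
  have hnum := strictConcaveOn_log_qPochhammerInf Real.pi_pos Real.two_pi_pos
  have h := (strictConcaveOn_log_qPochhammerInf Real.two_pi_pos Real.two_pi_pos).add
    (hnum.add hnum)
  refine h.congr fun s _ ↦ ?_
  have hne {a : ℝ} (ha : 0 < a) :=
    (qPochhammerInf_pos (norm_exp_neg_mul_lt_one ha (Real.exp_pos s))
      (norm_exp_neg_mul_lt_one Real.two_pi_pos (Real.exp_pos s))).ne'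
  rw [logTheta4, theta4_eq_qPochhammerInf (Real.exp_pos s), sq,
    Real.log_mul (hne Real.two_pi_pos) (mul_ne_zero (hne Real.pi_pos) (hne Real.pi_pos)),
    Real.log_mul (hne Real.pi_pos) (hne Real.pi_pos)]
  rfl

lemma prod_theta4_rpow_mul {ι : Type*} [Fintype ι] {c : ι → ℝ} (hc : ∀ i, 0 < c i) {α : ℝ}
    (hα : 0 < α) (t : ℝ) :
    ∏ i, theta4 (c i ^ t * α) =
      Real.exp (∑ i, logTheta4 (t * Real.log (c i) + Real.log α)) := by
  rw [Real.exp_sum]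
  refine Finset.prod_congr rfl fun i _ ↦ ?_
  rw [exp_logTheta4, Real.exp_add, Real.exp_log hα, mul_comm t, ← Real.rpow_def_of_pos (hc i)]

end Theta4

/-- with `c_i > 0`, `∏ c_i = 1`, not all `c_i = 1`, the function
`U₄(t) = ∏ θ₄(c_i^t α)` satisfies `U₄'(0)=0`, `U₄' > 0` on `t<0`, `U₄' < 0` on `t>0`;
in particular `t = 0` is the unique strict maximum of `U₄`. -/
theorem U4_unique_maximum
    (d : ℕ) (hd : 1 ≤ d) (α : ℝ) (hα : 0 < α)
    (c : Fin d → ℝ) (hc : ∀ i, 0 < c i) (hprod : ∏ i, c i = 1)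
    (hne : ¬ ∀ i, c i = 1)
    (U : ℝ → ℝ) (hU : ∀ t : ℝ, U t = ∏ i, theta4 (Real.rpow (c i) t * α)) :
    deriv U 0 = 0 ∧ (∀ t : ℝ, t < 0 → 0 < deriv U t) ∧
      (∀ t : ℝ, 0 < t → deriv U t < 0) ∧ (∀ t : ℝ, t ≠ 0 → U t < U 0) := by
  set G : ℝ → ℝ := fun t ↦ ∑ i, logTheta4 (t * Real.log (c i) + Real.log α)
  have hUG (t : ℝ) : U t = Real.exp (G t) := (hU t).trans (prod_theta4_rpow_mul hc hα t)
  have hlog_sum : ∑ i, Real.log (c i) = 0 := by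
    rw [← Real.log_prod fun i _ ↦ (hc i).ne', hprod, Real.log_one]
  obtain ⟨i₀, hi₀⟩ := not_forall.1 hne
  have hconcave : StrictConcaveOn ℝ Set.univ G := strictConcaveOn_sum_comp_mul_add
    strictConcaveOn_logTheta4 ⟨i₀, Real.log_ne_zero_of_pos_of_ne_one (hc i₀) hi₀⟩ _
  have hdiff : Differentiable ℝ G := Differentiable.fun_sum fun i _ ↦
    differentiable_logTheta4.comp ((differentiable_id.mul_const _).add_const _)
  have hG₀ : deriv G 0 = 0 :=
    (hasDerivAt_sum_comp_mul_add_zero (differentiable_logTheta4 _) hlog_sum).deriv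
  have hanti : StrictAnti (deriv G) := strictAntiOn_univ.1
    (hconcave.strictAntiOn_deriv fun t _ ↦ hdiff t)
  have hderiv (t : ℝ) : deriv U t = Real.exp (G t) * deriv G t := by
    rw [funext hUG, deriv_exp (hdiff t)]
  have hpos (t : ℝ) (ht : t < 0) : 0 < deriv U t :=
    hderiv t ▸ mul_pos (Real.exp_pos _) (hG₀ ▸ hanti ht)
  have hneg (t : ℝ) (ht : 0 < t) : deriv U t < 0 :=
    hderiv t ▸ mul_neg_of_pos_of_neg (Real.exp_pos _) (hG₀ ▸ hanti ht)
  have hcont : Continuous U := funext hUG ▸ hdiff.continuous.rexp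
  exact ⟨by rw [hderiv, hG₀, mul_zero], hpos, hneg,
    fun t ht ↦ lt_of_deriv_pos_of_deriv_neg hcont hpos hneg ht⟩
end

section
/- Let d ≥ 1 and α > 0. Assume c₁,…,c_d > 0 satisfy ∏_{i=1}^d c_i = 1 and not all c_i equal 1. Define U₂(t) = ∏_{i=1}^{d} θ₂(c_i^t α) for t ∈ ℝ, where θ₂(x) = Σ_{k∈ℤ} e^{−π(k+1/2)²x}; equivalently U₂(t) = Σ_{n∈ℤ^d} exp(−πα|A_t(n+(1/2,…,1/2))|²) with A_t = diag(c₁^t,…,c_d^t). Then U₂'(0) = 0, U₂'(t) > 0 for t < 0, and U₂'(t) < 0 for t > 0; in particular t = 0 is the unique strict maximum of U₂. -/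
open scoped BigOperators

/-!
In the logarithmic variable, `log U₂(t) = ∑ i, F (log α + t * log c_i)` with `F s = log θ₂(eˢ)`. If
`F` is strictly concave, then so is `log U₂`, and `∑ i, log c_i = 0` makes `0` its critical point.

The modular relation `θ₂(x) = x ^ (-1/2) * θ₄(1 / x)` gives `F s = -s / 2 + log θ₄(e⁻ˢ)`. With
`q = exp (-π x)` the factors of Gauss's product `θ₄(x) = ∏ (1 - qᵏ) / (1 + qᵏ)`, taken over `k ≥ 1`,
are `tanh (k π x / 2)`. Each `s ↦ log tanh (c eˢ)` is strictly concave: with `u = 2 c eˢ` its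
derivative is `u / sinh u`, which decreases.

Gauss's identity follows from Shanks's finite version, in which the partial sums of the theta series
differ from the partial products by terms that are `O(n qⁿ)`.
-/

namespace ThetaTwo

/-! ### Gauss's product for `∑ (-1) ^ k * q ^ k ^ 2` -/

section GaussProduct

open Finset Filter Topology

variable {K : Type*} [Field K]

/-- The factor `(1 - qᵏ) / (1 + qᵏ)` of Gauss's product. -/
def gaussFactor (q : K) (k : ℕ) : K := (1 - q ^ k) / (1 + q ^ k)

/-- The `s`-th term of Shanks's finite form of Gauss's identity: the term with `s = 0` is the `n`-th
partial product, and the sum over `s ≤ n` is a partial sum of the theta series. -/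
def shanksTerm (q : K) (n s : ℕ) : K :=
  (-1) ^ s * (2 / (1 + q ^ s)) * q ^ (s * (n + 1)) * ∏ k ∈ Ico s n, gaussFactor q (k + 1)

lemma sum_shanksTerm_succ_sub {q : K} (hq : ∀ k, 1 + q ^ k ≠ 0) {m n : ℕ} (hmn : m ≤ n) :
    ∑ s ∈ range (m + 1), (shanksTerm q (n + 1) s - shanksTerm q n s) =
      (-1) ^ (m + 1) * (2 / (1 + q ^ (n + 1))) * q ^ ((m + 1) * (n + 1)) *
        ∏ k ∈ Ico m n, gaussFactor q (k + 1) := by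
  have hn := hq (n + 1)
  induction m with
  | zero =>
    have h2 : (2 : K) ≠ 0 := by simpa [one_add_one_eq_two] using hq 0
    simp only [zero_add, range_one, sum_singleton, shanksTerm, prod_Ico_succ_top hmn, pow_zero,
      one_add_one_eq_two, div_self h2, gaussFactor]
    field_simp
    ring
  | succ m ih =>
    have hm := hq (m + 1)
    rw [sum_range_succ, ih (by omega), prod_eq_prod_Ico_succ_bot (Nat.lt_of_succ_le hmn)]
    simp only [shanksTerm, prod_Ico_succ_top hmn, gaussFactor]
    field_simp
    ring

lemma sum_shanksTerm {q : K} (hq : ∀ k, 1 + q ^ k ≠ 0) (n : ℕ) :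
    ∑ s ∈ range (n + 1), shanksTerm q n s =
      1 + ∑ k ∈ range n, 2 * ((-1) ^ (k + 1) * q ^ (k + 1) ^ 2) := by
  induction n with
  | zero =>
    have h2 : (2 : K) ≠ 0 := by simpa [one_add_one_eq_two] using hq 0
    simp [shanksTerm, one_add_one_eq_two, h2]
  | succ n ih =>
    have hn := hq (n + 1)
    have hstep := sum_shanksTerm_succ_sub hq le_rfl (n := n)
    rw [sum_sub_distrib, ih, sub_eq_iff_eq_add] at hstep
    rw [sum_range_succ, hstep, sum_range_succ, shanksTerm]
    simp only [Ico_self, prod_empty]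
    field_simp
    ring

variable {q : ℝ}

lemma abs_gaussFactor_le_one (hq : 0 ≤ q) (hq1 : q ≤ 1) (k : ℕ) : |gaussFactor q k| ≤ 1 := by
  have hpow_nonneg : 0 ≤ q ^ k := by positivity
  have hpow_le_one : q ^ k ≤ 1 := pow_le_one₀ hq hq1
  rw [gaussFactor, abs_of_nonneg (by apply div_nonneg <;> linarith), div_le_one (by linarith)]
  linarith

lemma abs_shanksTerm_succ_le (hq : 0 ≤ q) (hq1 : q ≤ 1) (n s : ℕ) :
    |shanksTerm q n (s + 1)| ≤ 2 * q ^ (n + 1) := by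
  have hpow_nonneg : 0 ≤ q ^ (s + 1) := by positivity
  have hcoef : 2 / (1 + q ^ (s + 1)) ≤ 2 := div_le_self zero_le_two (by linarith)
  have hpow : q ^ ((s + 1) * (n + 1)) ≤ q ^ (n + 1) :=
    pow_le_pow_of_le_one hq hq1 (Nat.le_mul_of_pos_left _ s.succ_pos)
  have hprod : ∏ k ∈ Ico (s + 1) n, |gaussFactor q (k + 1)| ≤ 1 :=
    prod_le_one (fun _ _ => abs_nonneg _) fun k _ => abs_gaussFactor_le_one hq hq1 (k + 1)
  rw [shanksTerm, abs_mul, abs_mul, abs_mul, abs_neg_one_pow, one_mul, abs_prod,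
    abs_of_nonneg (by positivity), abs_of_nonneg (by positivity)]
  calc _ ≤ 2 * q ^ (n + 1) * 1 := by gcongr
    _ = 2 * q ^ (n + 1) := mul_one _

lemma tendsto_prod_gaussFactor (hq : 0 ≤ q) (hq1 : q < 1) {l : ℝ}
    (hl : HasSum (fun k : ℕ => 2 * ((-1) ^ (k + 1) * q ^ (k + 1) ^ 2)) l) :
    Tendsto (fun n => ∏ k ∈ range n, gaussFactor q (k + 1)) atTop (𝓝 (1 + l)) := by
  have hrem : Tendsto (fun n => ∑ s ∈ range n, shanksTerm q n (s + 1)) atTop (𝓝 0) := by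
    refine squeeze_zero_norm (a := fun n : ℕ => n * (2 * q ^ (n + 1))) (fun n => ?_) ?_
    · simpa using norm_sum_le_of_le (range n) (f := fun s => shanksTerm q n (s + 1)) fun s _ =>
        abs_shanksTerm_succ_le hq hq1.le n s
    · convert (tendsto_self_mul_const_pow_of_lt_one hq hq1).const_mul (2 * q) using 2 <;> ring
  have hsplit (n : ℕ) : ∏ k ∈ range n, gaussFactor q (k + 1) =
      1 + ∑ k ∈ range n, 2 * ((-1) ^ (k + 1) * q ^ (k + 1) ^ 2) -
        ∑ s ∈ range n, shanksTerm q n (s + 1) := by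
    have hden (k : ℕ) : 1 + q ^ k ≠ 0 := by positivity
    rw [← sum_shanksTerm hden, sum_range_succ', add_sub_cancel_left, shanksTerm]
    norm_num
  simpa only [hsplit, sub_zero] using (hl.tendsto_sum_nat.const_add 1).sub hrem

end GaussProduct

/-! ### Concave functions -/

section Concave

open Finset Set Filter Topology

lemma strictConcaveOn_comp_affineMap {𝕜 E F β : Type*} [Field 𝕜] [LinearOrder 𝕜]
    [AddCommGroup E] [AddCommGroup F] [AddCommMonoid β] [PartialOrder β]
    [Module 𝕜 E] [Module 𝕜 F] [SMul 𝕜 β] {f : F → β} {s : Set F} {g : E →ᵃ[𝕜] F}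
    (hf : StrictConcaveOn 𝕜 s f) (hg : Function.Injective g) :
    StrictConcaveOn 𝕜 (g ⁻¹' s) (f ∘ g) :=
  ⟨hf.1.affine_preimage g, fun x hx y hy hxy p q hp hq hpq => by
    simp only [Function.comp_apply, Convex.combo_affine_apply hpq]
    exact hf.2 hx hy (hg.ne hxy) hp hq hpq⟩

variable {𝕜 E β ι : Type*} [Semiring 𝕜] [PartialOrder 𝕜] [AddCommMonoid E] [SMul 𝕜 E]
  [AddCommMonoid β] [PartialOrder β] [Module 𝕜 β] {s : Set E} {f : ι → E → β}

lemma concaveOn_sum [IsOrderedAddMonoid β] (hs : Convex 𝕜 s) (t : Finset ι)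
    (hf : ∀ i ∈ t, ConcaveOn 𝕜 s (f i)) : ConcaveOn 𝕜 s fun x => ∑ i ∈ t, f i x := by
  refine ⟨hs, fun x hx y hy p q hp hq hpq => ?_⟩
  simp only [smul_sum, ← sum_add_distrib]
  exact sum_le_sum fun i hi => (hf i hi).2 hx hy hp hq hpq

lemma strictConcaveOn_sum [IsOrderedCancelAddMonoid β] {t : Finset ι}
    (hf : ∀ i ∈ t, ConcaveOn 𝕜 s (f i)) (hstrict : ∃ i ∈ t, StrictConcaveOn 𝕜 s (f i)) :
    StrictConcaveOn 𝕜 s fun x => ∑ i ∈ t, f i x := by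
  obtain ⟨j, hj, hfj⟩ := hstrict
  refine ⟨hfj.1, fun x hx y hy hxy p q hp hq hpq => ?_⟩
  simp only [smul_sum, ← sum_add_distrib]
  exact sum_lt_sum (fun i hi => (hf i hi).2 hx hy hp.le hq.le hpq)
    ⟨j, hj, hfj.2 hx hy hxy hp hq hpq⟩

lemma lt_of_strictConcaveOn_of_hasDerivAt_zero {S : Set ℝ} {f : ℝ → ℝ} {x y : ℝ}
    (hf : StrictConcaveOn ℝ S f) (hx : x ∈ S) (hy : y ∈ S) (hne : y ≠ x) (hd : HasDerivAt f 0 x) :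
    f y < f x := by
  rcases hne.lt_or_gt with hlt | hlt
  · simpa [slope_def_field, hlt] using hf.lt_slope_of_hasDerivAt hy hx hlt hd
  · simpa [slope_def_field, div_neg_iff, hlt, hlt.not_gt] using
      hf.slope_lt_of_hasDerivAt hx hy hlt hd

lemma strictConcaveOn_of_tendsto_sum_range {E : Type*} [AddCommMonoid E] [SMul ℝ E] {s : Set E}
    {f : ℕ → E → ℝ} {F : E → ℝ} (hzero : StrictConcaveOn ℝ s (f 0))
    (hsucc : ∀ k, ConcaveOn ℝ s (f (k + 1)))
    (hlim : ∀ x ∈ s, Tendsto (fun n => ∑ k ∈ Finset.range n, f k x) atTop (𝓝 (F x))) :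
    StrictConcaveOn ℝ s F := by
  -- Strictness is lost in a pointwise limit, so the first term is kept out of it.
  have htail : ConcaveOn ℝ s (F - f 0) := by
    have hsub (x : E) (hx : x ∈ s) :
        Tendsto (fun n => ∑ k ∈ Finset.range n, f (k + 1) x) atTop (𝓝 ((F - f 0) x)) := by
      simpa [sum_range_succ'] using
        ((tendsto_add_atTop_iff_nat 1).2 (hlim x hx)).sub_const (f 0 x)
    refine ⟨hzero.1, fun x hx y hy p q hp hq hpq => ?_⟩
    exact le_of_tendsto_of_tendsto' (((hsub x hx).const_smul p).add ((hsub y hy).const_smul q))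
      (hsub _ (hzero.1 hx hy hp hq hpq))
      fun n => (concaveOn_sum hzero.1 _ fun k _ => hsucc k).2 hx hy hp hq hpq
  simpa using hzero.add_concaveOn htail

end Concave

section Lines

open Set

variable {E ι : Type*} [Fintype ι] {f : E → ℝ} {v : ι → E}

lemma strictConcaveOn_sum_add_smul [AddCommGroup E] [Module ℝ E] (hf : StrictConcaveOn ℝ univ f)
    (a : E) (hv : ∃ i, v i ≠ 0) : StrictConcaveOn ℝ univ fun t : ℝ => ∑ i, f (a + t • v i) := by
  have hline (i : ι) : (fun t : ℝ => f (a + t • v i)) = f ∘ AffineMap.lineMap a (a + v i) := by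
    ext t
    simp [AffineMap.lineMap_apply, add_comm]
  refine strictConcaveOn_sum (fun i _ => ?_) ?_
  · rw [hline]
    exact hf.concaveOn.comp_affineMap _
  · obtain ⟨j, hj⟩ := hv
    refine ⟨j, Finset.mem_univ j, ?_⟩
    rw [hline]
    exact strictConcaveOn_comp_affineMap hf (AffineMap.lineMap_injective ℝ (by simpa using hj))

lemma hasDerivAt_sum_add_smul_zero [NormedAddCommGroup E] [NormedSpace ℝ E] {a : E}
    (hf : DifferentiableAt ℝ f a) (hv : ∑ i, v i = 0) :
    HasDerivAt (fun t : ℝ => ∑ i, f (a + t • v i)) 0 0 := by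
  have hd (i : ι) : HasDerivAt (fun t : ℝ => f (a + t • v i)) (fderiv ℝ f a (v i)) 0 :=
    hf.hasFDerivAt.hasLineDerivAt (v i)
  simpa [← map_sum, hv] using HasDerivAt.fun_sum fun i (_ : i ∈ Finset.univ) => hd i

end Lines

/-! ### Hyperbolic functions -/

section Hyperbolic

open Set Real

lemma strictConvexOn_sinh : StrictConvexOn ℝ (Ici 0) sinh := by
  refine strictConvexOn_of_deriv2_pos (convex_Ici 0) continuous_sinh.continuousOn fun x hx => ?_
  rw [interior_Ici] at hx
  simpa using hx

lemma strictAntiOn_div_sinh : StrictAntiOn (fun x => x / sinh x) (Ioi 0) := by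
  intro x hx y hy hxy
  have hsx : 0 < sinh x := sinh_pos_iff.2 hx
  have hsy : 0 < sinh y := sinh_pos_iff.2 hy
  have hslope := strictConvexOn_sinh.secant_strict_mono self_mem_Ici (Ioi_subset_Ici_self hx)
    (Ioi_subset_Ici_self hy) (ne_of_gt hx) (ne_of_gt hy) hxy
  simp only [sinh_zero, sub_zero] at hslope
  rw [div_lt_div_iff₀ hx hy] at hslope
  rw [div_lt_div_iff₀ hsy hsx]
  linarith

lemma hasDerivAt_log_tanh {x : ℝ} (hx : 0 < x) :
    HasDerivAt (fun x => log (tanh x)) (2 / sinh (2 * x)) x := by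
  have hs : sinh x ≠ 0 := (sinh_pos_iff.2 hx).ne'
  have hc : cosh x ≠ 0 := (cosh_pos x).ne'
  simp only [tanh_eq_sinh_div_cosh]
  refine (((hasDerivAt_sinh x).fun_div (hasDerivAt_cosh x) hc).log
    (div_ne_zero hs hc)).congr_deriv ?_
  rw [sinh_two_mul, ← sq, ← sq, cosh_sq_sub_sinh_sq]
  field_simp

lemma strictConcaveOn_log_tanh_mul_exp {c : ℝ} (hc : 0 < c) :
    StrictConcaveOn ℝ univ fun s => log (tanh (c * exp s)) := by
  have hpos (s : ℝ) : 0 < c * exp s := by positivity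
  have hderiv (s : ℝ) : HasDerivAt (fun s => log (tanh (c * exp s)))
      (2 * (c * exp s) / sinh (2 * (c * exp s))) s := by
    refine ((hasDerivAt_log_tanh (hpos s)).comp s ((hasDerivAt_exp s).const_mul c)).congr_deriv ?_
    ring
  refine StrictAnti.strictConcaveOn_univ_of_deriv
    (continuous_iff_continuousAt.2 fun s => (hderiv s).continuousAt) fun s t hst => ?_
  rw [(hderiv s).deriv, (hderiv t).deriv]
  refine strictAntiOn_div_sinh (mul_pos two_pos (hpos s)) (mul_pos two_pos (hpos t)) ?_
  gcongr

lemma gaussFactor_exp_neg (x : ℝ) (k : ℕ) : gaussFactor (exp (-(2 * x))) k = tanh (k * x) := by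
  have hmul : exp (k * -(2 * x)) * exp (k * x) = exp (-(k * x)) := by
    rw [← exp_add]
    ring_nf
  rw [gaussFactor, ← exp_nat_mul, tanh_eq, div_eq_div_iff (by positivity) (by positivity)]
  linear_combination -2 * hmul

end Hyperbolic

/-! ### The theta functions -/

section Theta

open Set Filter Topology Real HurwitzZeta

lemma differentiableAt_evenKernel (a : UnitAddCircle) {x : ℝ} (hx : 0 < x) :
    DifferentiableAt ℝ (evenKernel a) x := by
  induction a using QuotientAddGroup.induction_on with | H a =>
  have hre : evenKernel a = fun u : ℝ => (Complex.exp (-π * a ^ 2 * u) *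
      jacobiTheta₂ (a * Complex.I * u) (Complex.I * u)).re := by
    ext u
    rw [← evenKernel_def, Complex.ofReal_re]
  have htheta : DifferentiableAt ℝ
      (fun u : ℝ => jacobiTheta₂ (a * Complex.I * u) (Complex.I * u)) x :=
    ((hasFDerivAt_jacobiTheta₂ _ (by simpa)).restrictScalars ℝ).differentiableAt.comp x
      (f := fun u : ℝ => ((a * Complex.I * u : ℂ), (Complex.I * u : ℂ))) (by fun_prop)
  rw [hre]
  exact Complex.reCLM.differentiableAt.comp x (DifferentiableAt.mul (by fun_prop) htheta)

lemma theta2_eq_evenKernel {x : ℝ} (hx : 0 < x) :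
    theta2 x = evenKernel ((1 / 2 : ℝ) : UnitAddCircle) x :=
  (hasSum_int_evenKernel (1 / 2) hx).tsum_eq

lemma theta2_pos {x : ℝ} (hx : 0 < x) : 0 < theta2 x :=
  (hasSum_int_evenKernel (1 / 2) hx).summable.tsum_pos (fun _ => (exp_pos _).le) 0 (exp_pos _)

/-- The Jacobi theta function `θ₄`, to which `θ₂` is related by `x ↦ 1 / x`. -/
noncomputable def theta4 (x : ℝ) : ℝ := ∑' n : ℤ, (-1) ^ n * exp (-π * n ^ 2 * x)

lemma theta4_eq_cosKernel {x : ℝ} (hx : 0 < x) :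
    theta4 x = cosKernel ((1 / 2 : ℝ) : UnitAddCircle) x := by
  refine HasSum.tsum_eq ?_
  rw [← Complex.hasSum_ofReal]
  refine (hasSum_int_cosKernel (1 / 2) hx).congr_fun fun n => ?_
  have hsign : Complex.exp (2 * π * Complex.I * (1 / 2 : ℝ) * n) = (-1) ^ n := by
    rw [← Complex.exp_pi_mul_I, ← Complex.exp_int_mul]
    push_cast
    ring_nf
  rw [hsign]
  push_cast
  rfl

lemma hasSum_nat_theta4 {x : ℝ} (hx : 0 < x) :
    HasSum (fun k : ℕ => 2 * ((-1) ^ (k + 1) * exp (-π * x) ^ (k + 1) ^ 2)) (theta4 x - 1) := by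
  rw [theta4_eq_cosKernel hx]
  refine (hasSum_nat_cosKernel₀ (1 / 2) hx).congr_fun fun k => ?_
  have hcos : cos (2 * π * (1 / 2) * (k + 1)) = (-1) ^ (k + 1) := by
    rw [← cos_nat_mul_pi]
    push_cast
    ring_nf
  rw [hcos, ← exp_nat_mul]
  push_cast
  ring_nf

lemma theta2_eq_theta4 {x : ℝ} (hx : 0 < x) : theta2 x = 1 / x ^ (1 / 2 : ℝ) * theta4 (1 / x) := by
  rw [theta2_eq_evenKernel hx, theta4_eq_cosKernel (one_div_pos.2 hx),
    evenKernel_functional_equation]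

lemma theta4_pos {x : ℝ} (hx : 0 < x) : 0 < theta4 x := by
  have h := theta2_pos (one_div_pos.2 hx)
  rw [theta2_eq_theta4 (one_div_pos.2 hx), one_div_one_div] at h
  exact pos_of_mul_pos_right h (by positivity)

lemma tendsto_prod_tanh_theta4 {x : ℝ} (hx : 0 < x) :
    Tendsto (fun n => ∏ k ∈ Finset.range n, tanh ((k + 1) * (π / 2) * x)) atTop
      (𝓝 (theta4 x)) := by
  have hq : exp (-π * x) < 1 := exp_lt_one_iff.2 (by nlinarith [pi_pos])
  have hfactor (k : ℕ) : gaussFactor (exp (-π * x)) (k + 1) = tanh ((k + 1) * (π / 2) * x) := by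
    rw [show -π * x = -(2 * (π / 2 * x)) by ring, gaussFactor_exp_neg, mul_assoc]
    push_cast
    rfl
  simpa only [hfactor, add_sub_cancel] using
    tendsto_prod_gaussFactor (exp_pos _).le hq (hasSum_nat_theta4 hx)

lemma tendsto_sum_log_tanh_theta4 {x : ℝ} (hx : 0 < x) :
    Tendsto (fun n => ∑ k ∈ Finset.range n, log (tanh ((k + 1) * (π / 2) * x))) atTop
      (𝓝 (log (theta4 x))) := by
  refine ((tendsto_prod_tanh_theta4 hx).log (theta4_pos hx).ne').congr fun n => ?_
  refine log_prod fun k _ => ?_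
  have harg : 0 < (k + 1) * (π / 2) * x := by positivity
  rw [tanh_eq_sinh_div_cosh]
  exact (div_pos (sinh_pos_iff.2 harg) (cosh_pos _)).ne'

lemma strictConcaveOn_log_theta4_exp : StrictConcaveOn ℝ univ fun s => log (theta4 (exp s)) := by
  have hterm (k : ℕ) :
      StrictConcaveOn ℝ univ fun s => log (tanh ((k + 1) * (π / 2) * exp s)) :=
    strictConcaveOn_log_tanh_mul_exp (by positivity)
  exact strictConcaveOn_of_tendsto_sum_range (hterm 0) (fun k => (hterm (k + 1)).concaveOn)
    fun s _ => tendsto_sum_log_tanh_theta4 (exp_pos s)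

/-- `log θ₂` in the logarithmic variable, in which scaling the argument becomes a translation. -/
noncomputable def logThetaExp (s : ℝ) : ℝ := log (theta2 (exp s))

lemma logThetaExp_eq_log_theta4 (s : ℝ) :
    logThetaExp s = log (theta4 (exp (-s))) + -(1 / 2) * s := by
  have h4 : theta4 (exp (-s)) ≠ 0 := (theta4_pos (exp_pos _)).ne'
  rw [logThetaExp, theta2_eq_theta4 (exp_pos s), one_div (exp s), ← exp_neg,
    log_mul (by positivity) h4, one_div, log_inv, log_rpow (exp_pos s), log_exp]
  ring

lemma strictConcaveOn_logThetaExp : StrictConcaveOn ℝ univ logThetaExp := by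
  have hneg : StrictConcaveOn ℝ univ fun s => log (theta4 (exp (-s))) :=
    strictConcaveOn_comp_affineMap strictConcaveOn_log_theta4_exp
      (g := (-LinearMap.id : ℝ →ₗ[ℝ] ℝ).toAffineMap) neg_injective
  rw [funext logThetaExp_eq_log_theta4]
  exact hneg.add_concaveOn ((LinearMap.mulLeft ℝ (-(1 / 2) : ℝ)).concaveOn convex_univ)

lemma differentiable_logThetaExp : Differentiable ℝ logThetaExp := fun s => by
  have htheta : DifferentiableAt ℝ theta2 (exp s) :=
    (differentiableAt_evenKernel _ (exp_pos s)).congr_of_eventuallyEq <|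
      (eventually_gt_nhds (exp_pos s)).mono fun _ => theta2_eq_evenKernel
  exact (htheta.comp s differentiableAt_exp).log (theta2_pos (exp_pos s)).ne'

lemma prod_theta2_rpow_mul {ι : Type*} [Fintype ι] {c : ι → ℝ} (hc : ∀ i, 0 < c i) {α : ℝ}
    (hα : 0 < α) (t : ℝ) :
    ∏ i, theta2 (c i ^ t * α) = exp (∑ i, logThetaExp (log α + t • log (c i))) := by
  rw [exp_sum]
  refine Finset.prod_congr rfl fun i _ => ?_
  have harg : exp (log α + t • log (c i)) = c i ^ t * α := by
    rw [exp_add, exp_log hα, smul_eq_mul, mul_comm t, ← rpow_def_of_pos (hc i), mul_comm]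
  rw [logThetaExp, exp_log (theta2_pos (exp_pos _)), harg]

end Theta

end ThetaTwo

/-- with `c_i > 0`, `∏ c_i = 1`, not all `c_i = 1`, the function
`U₂(t) = ∏ θ₂(c_i^t α) = θ_{A_t(ℤ+1/2)^d}(α)` satisfies `U₂'(0)=0`, `U₂' > 0` on `t<0`,
`U₂' < 0` on `t>0`; in particular `t = 0` is the unique strict maximum of `U₂`. -/
theorem U2_unique_maximum
    (d : ℕ) (hd : 1 ≤ d) (α : ℝ) (hα : 0 < α)
    (c : Fin d → ℝ) (hc : ∀ i, 0 < c i) (hprod : ∏ i, c i = 1)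
    (hne : ¬ ∀ i, c i = 1)
    (U : ℝ → ℝ) (hU : ∀ t : ℝ, U t = ∏ i, theta2 (Real.rpow (c i) t * α)) :
    deriv U 0 = 0 ∧ (∀ t : ℝ, t < 0 → 0 < deriv U t) ∧
      (∀ t : ℝ, 0 < t → deriv U t < 0) ∧ (∀ t : ℝ, t ≠ 0 → U t < U 0) := by
  let g : ℝ → ℝ := fun t => ∑ i, ThetaTwo.logThetaExp (Real.log α + t • Real.log (c i))
  have hU_exp : U = fun t => Real.exp (g t) :=
    funext fun t => (hU t).trans (ThetaTwo.prod_theta2_rpow_mul hc hα t)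
  have hlog : ∃ i, Real.log (c i) ≠ 0 :=
    (not_forall.1 hne).imp fun i hi => Real.log_ne_zero_of_pos_of_ne_one (hc i) hi
  have hlog_sum : ∑ i, Real.log (c i) = 0 := by
    rw [← Real.log_prod fun i _ => (hc i).ne', hprod, Real.log_one]
  have hconc : StrictConcaveOn ℝ Set.univ g :=
    ThetaTwo.strictConcaveOn_sum_add_smul ThetaTwo.strictConcaveOn_logThetaExp _ hlog
  have hcrit : HasDerivAt g 0 0 :=
    ThetaTwo.hasDerivAt_sum_add_smul_zero (ThetaTwo.differentiable_logThetaExp _) hlog_sum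
  have hdiff : Differentiable ℝ g :=
    .fun_sum fun i _ => ThetaTwo.differentiable_logThetaExp.comp (by fun_prop)
  have hanti : StrictAnti (deriv g) :=
    strictAntiOn_univ.1 (hconc.strictAntiOn_deriv fun t _ => hdiff t)
  have hderiv (t : ℝ) : deriv U t = Real.exp (g t) * deriv g t := by
    rw [hU_exp, (hdiff t).hasDerivAt.exp.deriv]
  refine ⟨by rw [hderiv, hcrit.deriv, mul_zero], fun t ht => ?_, fun t ht => ?_, fun t ht => ?_⟩
  · exact hderiv t ▸ mul_pos (Real.exp_pos _) (hcrit.deriv ▸ hanti ht)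
  · exact hderiv t ▸ mul_neg_of_pos_of_neg (Real.exp_pos _) (hcrit.deriv ▸ hanti ht)
  · simpa only [hU_exp, Real.exp_lt_exp] using
      ThetaTwo.lt_of_strictConcaveOn_of_hasDerivAt_zero hconc trivial trivial ht hcrit
end

section
/- Let Λ = Mℤ^d ⊂ ℝ^d be a Bravais lattice (M an invertible real d×d matrix). Then every bijection φ : Λ → Λ satisfying |φ(p) − φ(q)| = |p − q| for all p, q ∈ Λ is the restriction to Λ of an affine isometry of ℝ^d; that is, there exists an affine isometry ψ : ℝ^d → ℝ^d with ψ(p) = φ(p) for all p ∈ Λ. -/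
open scoped BigOperators

/-!
In a finite-dimensional Euclidean space, equality of all pairwise distances between two families
of points already forces an affine isometry between them. After a base point is fixed, polarization
turns equal distances into equal inner products. Hence `‖∑ cᵢ vᵢ‖ = ‖∑ cᵢ wᵢ‖` for all
coefficients, so `∑ cᵢ vᵢ ↦ ∑ cᵢ wᵢ` is a well-defined linear isometry on the span of the `vᵢ`;
it extends to the whole space because the orthogonal complements of the two spans have the same
dimension.
-/

open Finsupp (linearCombination)
open scoped InnerProductSpace

theorem exists_linearIsometry_range_of_norm_eq {𝕜 M E F : Type*} [DivisionRing 𝕜]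
    [AddCommGroup M] [Module 𝕜 M] [SeminormedAddCommGroup E] [Module 𝕜 E]
    [NormedAddCommGroup F] [Module 𝕜 F] {f : M →ₗ[𝕜] E} {g : M →ₗ[𝕜] F}
    (h : ∀ x, ‖g x‖ = ‖f x‖) :
    ∃ R : LinearMap.range f →ₗᵢ[𝕜] F, ∀ x, R (f.rangeRestrict x) = g x := by
  have h_factor (x : M) : g.compLeftInverse f (f.rangeRestrict x) = g x :=
    g.compLeftInverse_apply_of_bdd f ⟨1, fun y ↦ by rw [h, one_mul]⟩ x _ rfl
  refine ⟨⟨(g.compLeftInverse f).toLinearMap, ?_⟩, h_factor⟩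
  rintro ⟨_, x, rfl⟩
  exact (congrArg norm (h_factor x)).trans (h x)

section GramMatrix

variable {ι 𝕜 E F : Type*} [RCLike 𝕜]

theorem norm_linearCombination_eq_of_inner_eq [SeminormedAddCommGroup E] [InnerProductSpace 𝕜 E]
    [SeminormedAddCommGroup F] [InnerProductSpace 𝕜 F] {v : ι → E} {w : ι → F}
    (h : ∀ i j, ⟪v i, v j⟫_𝕜 = ⟪w i, w j⟫_𝕜) (c : ι →₀ 𝕜) :
    ‖linearCombination 𝕜 v c‖ = ‖linearCombination 𝕜 w c‖ := by
  simp only [@norm_eq_sqrt_re_inner 𝕜, Finsupp.linearCombination_apply, Finsupp.sum_inner,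
    Finsupp.inner_sum, inner_smul_left, inner_smul_right, h]

theorem exists_linearIsometry_of_inner_eq [NormedAddCommGroup E] [InnerProductSpace 𝕜 E]
    [FiniteDimensional 𝕜 E] {v w : ι → E} (h : ∀ i j, ⟪v i, v j⟫_𝕜 = ⟪w i, w j⟫_𝕜) :
    ∃ R : E →ₗᵢ[𝕜] E, ∀ i, R (v i) = w i := by
  obtain ⟨R, hR⟩ := exists_linearIsometry_range_of_norm_eq fun c ↦
    (norm_linearCombination_eq_of_inner_eq h c).symm
  refine ⟨R.extend, fun i ↦ ?_⟩
  simpa [← R.extend_apply] using hR (Finsupp.single i 1)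

end GramMatrix

theorem inner_vsub_vsub_eq_of_congruent {ι V₁ V₂ P₁ P₂ : Type*}
    [SeminormedAddCommGroup V₁] [InnerProductSpace ℝ V₁] [PseudoMetricSpace P₁]
    [NormedAddTorsor V₁ P₁] [SeminormedAddCommGroup V₂] [InnerProductSpace ℝ V₂]
    [PseudoMetricSpace P₂] [NormedAddTorsor V₂ P₂] {p : ι → P₁} {q : ι → P₂}
    (h : Congruent p q) (i j k : ι) :
    ⟪p i -ᵥ p k, p j -ᵥ p k⟫_ℝ = ⟪q i -ᵥ q k, q j -ᵥ q k⟫_ℝ := by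
  simp only [real_inner_eq_norm_mul_self_add_norm_mul_self_sub_norm_sub_mul_self_div_two,
    vsub_sub_vsub_cancel_right, ← dist_eq_norm_vsub, h.dist_eq]

theorem lattice_isometry_is_affine_general {ι V P₁ P₂ : Type*} [NormedAddCommGroup V]
    [InnerProductSpace ℝ V] [FiniteDimensional ℝ V] [PseudoMetricSpace P₁] [NormedAddTorsor V P₁]
    [PseudoMetricSpace P₂] [NormedAddTorsor V P₂] {p : ι → P₁} {q : ι → P₂}
    (h : Congruent p q) : ∃ ψ : P₁ →ᵃⁱ[ℝ] P₂, ∀ i, ψ (p i) = q i := by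
  obtain ⟨x, y, R, hR⟩ : ∃ (x : P₁) (y : P₂) (R : V →ₗᵢ[ℝ] V), ∀ i, R (p i -ᵥ x) = q i -ᵥ y := by
    rcases isEmpty_or_nonempty ι with _ | ⟨⟨k⟩⟩
    · obtain ⟨x⟩ := AddTorsor.nonempty (G := V) (P := P₁)
      obtain ⟨y⟩ := AddTorsor.nonempty (G := V) (P := P₂)
      exact ⟨x, y, .id, isEmptyElim⟩
    · exact ⟨p k, q k, exists_linearIsometry_of_inner_eq fun i j ↦
        inner_vsub_vsub_eq_of_congruent h i j k⟩
  let ψ : P₁ →ᵃⁱ[ℝ] P₂ := (AffineIsometryEquiv.vaddConst ℝ y).toAffineIsometry.comp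
    (R.toAffineIsometry.comp (AffineIsometryEquiv.vaddConst ℝ x).symm.toAffineIsometry)
  exact ⟨ψ, fun i ↦ by simp [ψ, hR]⟩

/-- every distance-preserving bijection of a Bravais lattice `Λ = Mℤ^d` onto
itself is the restriction of an affine isometry `x ↦ Rx + v` of `ℝ^d` (Euclidean). -/
theorem lattice_isometry_is_affine
    (d : ℕ) (M : Matrix (Fin d) (Fin d) ℝ) (hM : IsUnit M.det)
    (L : Set (EuclideanSpace ℝ (Fin d)))
    (hL : L = {v : EuclideanSpace ℝ (Fin d) |
      ∃ k : Fin d → ℤ, ∀ i, v i = M.mulVec (fun j => (k j : ℝ)) i})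
    (φ : L ≃ L)
    (hφ : ∀ p q : L,
      dist (φ p : EuclideanSpace ℝ (Fin d)) (φ q : EuclideanSpace ℝ (Fin d))
        = dist (p : EuclideanSpace ℝ (Fin d)) (q : EuclideanSpace ℝ (Fin d))) :
    ∃ (R : EuclideanSpace ℝ (Fin d) →ₗᵢ[ℝ] EuclideanSpace ℝ (Fin d))
      (v : EuclideanSpace ℝ (Fin d)),
      ∀ p : L, (φ p : EuclideanSpace ℝ (Fin d)) = R (p : EuclideanSpace ℝ (Fin d)) + v := by
  obtain ⟨ψ, hψ⟩ := lattice_isometry_is_affine_general (.of_dist_eq fun p q ↦ (hφ p q).symm)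
  exact ⟨ψ.linearIsometry, ψ 0, fun p ↦ by simpa [hψ] using ψ.map_vadd 0 p.1⟩
end
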